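/- arXiv:2109.00792 — 5 statements merged into one kernel-verified Lean document; each statement's English description precedes it below -/
import Mathlib

section
/- Let G be a finite simple graph without isolated edges. If the edge set of G can be partitioned into the edge sets of complete subgraphs each of odd order, then G is total weight (1,3)-choosable. -/
/-!
Write the sums in question as `fv + N fe`, where `N` is the incidence matrix, and let `D` be the
coboundary matrix of an orientation. A weighting is proper iff no linear form in
`∏ a, ((D N fe) a + (D fv) a)` vanishes, so by the Combinatorial Nullstellensatz it suffices to find
in `∏ a, (D N x) a` a monomial with nonzero coefficient and all exponents at most `2`.

Identify each odd clique with some `ZMod n`, `n` odd, and give its edge `ij` the apex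
`k = (i + j) / 2`. If `C` is the matrix whose column at `ij` is `1_{ik} - 1_{jk}`, then `N C = Dᵀ`,
whence `per (D N C) = per (D Dᵀ)`. A Gram permanent is a sum of squares up to a factorial, and this
one is positive because `D x` has no zero entry when `x : V → ℝ` is injective. On the other hand,
expanding `per (D N C)` along monomials gives one whose coefficient in `∏ a, (D N x) a` is nonzero
and which is obtained by selecting a nonzero entry in each column of `C`. Every row of `C` has at
most two nonzero entries, since an endpoint and the apex of an edge determine the edge.
-/

/-- A total weighting (given by vertex weights `fv` and edge weights `fe`) of a simple
graph `G` is proper if for every edge `{i,j}`, the sums of the weight of the endpoint and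
the weights of incident edges differ at `i` and `j`. -/
def ProperTotalWeighting {V : Type*} [Fintype V] [DecidableEq V] (G : SimpleGraph V)
    [DecidableRel G.Adj] (fv : V → ℝ) (fe : Sym2 V → ℝ) : Prop :=
  ∀ ⦃i j : V⦄, G.Adj i j →
    fv i + ∑ e ∈ G.incidenceFinset i, fe e ≠ fv j + ∑ e ∈ G.incidenceFinset j, fe e

/-- `G` is total weight `(k, k')`-choosable: for every assignment of a set of `k` reals to
each vertex and a set of `k'` reals to each edge, there is a proper total weighting choosing
weights from the assigned sets. -/
def TotalWeightChoosable {V : Type*} [Fintype V] [DecidableEq V] (G : SimpleGraph V)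
    [DecidableRel G.Adj] (k k' : ℕ) : Prop :=
  ∀ (Lv : V → Finset ℝ) (Le : Sym2 V → Finset ℝ),
    (∀ v : V, (Lv v).card = k) → (∀ e ∈ G.edgeFinset, (Le e).card = k') →
    ∃ (fv : V → ℝ) (fe : Sym2 V → ℝ),
      (∀ v : V, fv v ∈ Lv v) ∧ (∀ e ∈ G.edgeFinset, fe e ∈ Le e) ∧
      ProperTotalWeighting G fv fe

open Matrix MvPolynomial
open scoped Finset Nat

section Permanent

variable {m n R : Type*} [Fintype m] [DecidableEq m] [Fintype n] [CommSemiring R]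

theorem permanent_mul (A : Matrix m n R) (B : Matrix n m R) :
    (A * B).permanent = ∑ f : m → n, (∏ i, A i (f i)) * (B.submatrix f id).permanent := by
  have permanent_eq (M : Matrix m m R) : M.permanent = ∑ σ : Equiv.Perm m, ∏ i, M i (σ i) :=
    M.permanent_transpose.symm
  simp only [permanent_eq, mul_apply, submatrix_apply, id, Fintype.prod_sum,
    Finset.prod_mul_distrib, Finset.mul_sum]
  exact Finset.sum_comm

theorem factorial_card_mul_permanent_mul (A : Matrix m n R) (B : Matrix n m R) :
    (Fintype.card m)! * (A * B).permanent =
      ∑ f : m → n, (A.submatrix id f).permanent * (B.submatrix f id).permanent := by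
  have sum_eq (σ : Equiv.Perm m) :
      ∑ f : m → n, (∏ i, A (σ i) (f i)) * (B.submatrix f id).permanent = (A * B).permanent := by
    rw [← permanent_permute_cols σ (A * B), submatrix_mul A B σ id id Function.bijective_id,
      permanent_mul]
    rfl
  calc ((Fintype.card m)! : R) * (A * B).permanent
    _ = ∑ σ : Equiv.Perm m, ∑ f : m → n,
          (∏ i, A (σ i) (f i)) * (B.submatrix f id).permanent := by
      simp [sum_eq, Fintype.card_perm]
    _ = ∑ f : m → n, (A.submatrix id f).permanent * (B.submatrix f id).permanent := by
      rw [Finset.sum_comm]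
      simp only [← Finset.sum_mul]
      rfl

theorem permanent_replicateCol (v : m → R) :
    (replicateCol m v).permanent = (Fintype.card m)! * ∏ i, v i := by
  simp [permanent, Equiv.prod_comp, Fintype.card_perm]

end Permanent

/-- A Gram permanent is, up to a factorial, a sum of squares; pairing the same terms with the powers
of the linear form `x` shows that they do not all vanish. -/
theorem permanent_mul_transpose_self_pos {m n R : Type*} [Fintype m] [DecidableEq m] [Fintype n]
    [CommRing R] [LinearOrder R] [IsStrictOrderedRing R] (A : Matrix m n R) (x : n → R)
    (hx : ∀ i, (A *ᵥ x) i ≠ 0) : 0 < (A * Aᵀ).permanent := by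
  have factorial_pos : (0 : R) < (Fintype.card m)! := by exact_mod_cast Nat.factorial_pos _
  obtain ⟨f, hf⟩ : ∃ f : m → n, (A.submatrix id f).permanent ≠ 0 := by
    by_contra! h
    have key := factorial_card_mul_permanent_mul A (replicateCol m x)
    rw [← replicateCol_mulVec, permanent_replicateCol] at key
    simp only [h, zero_mul, Finset.sum_const_zero] at key
    exact mul_ne_zero factorial_pos.ne'
      (mul_ne_zero factorial_pos.ne' (Finset.prod_ne_zero_iff.2 fun i _ => hx i)) key
  refine pos_of_mul_pos_right ?_ factorial_pos.le
  rw [factorial_card_mul_permanent_mul]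
  simp only [← transpose_submatrix, permanent_transpose]
  exact Finset.sum_pos' (fun g _ => mul_self_nonneg _)
    ⟨f, Finset.mem_univ f, mul_self_pos.2 hf⟩

section FiberCard

variable {m n : Type*} [Fintype m]

/-- The function `j ↦ #(f ⁻¹ j)`, i.e. the exponent vector of the monomial `∏ i, X (f i)`. -/
noncomputable def fiberCard (f : m → n) : n →₀ ℕ := ∑ i, Finsupp.single (f i) 1

theorem fiberCard_apply [DecidableEq n] (f : m → n) (j : n) : fiberCard f j = #{i | f i = j} := by
  simp [fiberCard, Finsupp.single_apply]

theorem degree_fiberCard (f : m → n) : (fiberCard f).degree = Fintype.card m := by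
  simp [fiberCard]

theorem exists_perm_of_fiberCard_eq {f g : m → n} (h : fiberCard f = fiberCard g) :
    ∃ σ : Equiv.Perm m, g ∘ σ = f := by
  classical
  have card_eq (j : n) : Fintype.card {i // f i = j} = Fintype.card {i // g i = j} := by
    simpa only [Fintype.card_subtype, fiberCard_apply] using DFunLike.congr_fun h j
  let e (j : n) := Fintype.equivOfCardEq (card_eq j)
  exact ⟨Equiv.ofFiberEquiv e, funext (Equiv.ofFiberEquiv_map e)⟩

end FiberCard

section Nullstellensatz

variable {m n R : Type*} [Fintype m]

theorem coeff_prod_toMvPolynomial [DecidableEq m] [Fintype n] [DecidableEq n] [CommSemiring R]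
    (A : Matrix m n R) (k : n →₀ ℕ) :
    (∏ i, A.toMvPolynomial i).coeff k = ∑ f : m → n with fiberCard f = k, ∏ i, A i (f i) := by
  have prod_monomial (f : m → n) : ∏ i, monomial (Finsupp.single (f i) 1) (A i (f i)) =
      monomial (fiberCard f) (∏ i, A i (f i)) := by
    rw [fiberCard, monomial_sum_index, map_prod, ← Finset.prod_mul_distrib]
    exact Finset.prod_congr rfl fun i _ => C_mul_X_eq_monomial.symm
  simp only [toMvPolynomial, Fintype.prod_sum, prod_monomial, coeff_sum, coeff_monomial,
    Finset.sum_filter]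

theorem coeff_prod_add_C [CommSemiring R] {p : m → MvPolynomial n R}
    (hp : ∀ i, (p i).IsHomogeneous 1) (c : m → R) {k : n →₀ ℕ} (hk : k.degree = Fintype.card m) :
    (∏ i, (p i + C (c i))).coeff k = (∏ i, p i).coeff k := by
  classical
  rw [Fintype.prod_add, coeff_sum, Finset.sum_eq_single Finset.univ]
  · simp
  · intro s _ hs
    have hom : ((∏ i ∈ s, p i) * ∏ i ∈ sᶜ, C (c i)).IsHomogeneous #s := by
      simpa [← map_prod] using
        (IsHomogeneous.prod s p (fun _ => 1) fun i _ => hp i).mul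
          (isHomogeneous_C n (∏ i ∈ sᶜ, c i))
    exact hom.coeff_eq_zero (hk.trans_ne ((Finset.card_lt_iff_ne_univ s).2 hs).ne')
  · simp

theorem exists_coeff_ne_zero_of_permanent_mul_ne_zero [DecidableEq m] [Fintype n] [CommSemiring R]
    {A : Matrix m n R} {B : Matrix n m R} (h : (A * B).permanent ≠ 0) :
    ∃ f : m → n, (∏ i, A.toMvPolynomial i).coeff (fiberCard f) ≠ 0 ∧
      (B.submatrix f id).permanent ≠ 0 := by
  classical
  contrapose! h
  rw [permanent_mul, ← Finset.sum_fiberwise_of_maps_to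
    fun f _ => Finset.mem_image_of_mem fiberCard (Finset.mem_univ f)]
  refine Finset.sum_eq_zero fun k hk => ?_
  obtain ⟨f, -, rfl⟩ := Finset.mem_image.1 hk
  have permanent_const (g : m → n) (hg : g ∈ ({g | fiberCard g = fiberCard f} : Finset (m → n))) :
      (∏ i, A i (g i)) * (B.submatrix g id).permanent =
        (∏ i, A i (g i)) * (B.submatrix f id).permanent := by
    obtain ⟨σ, rfl⟩ := exists_perm_of_fiberCard_eq (Finset.mem_filter.1 hg).2
    rw [← permanent_permute_cols σ (B.submatrix f id), submatrix_submatrix]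
    rfl
  rw [Finset.sum_congr rfl permanent_const, ← Finset.sum_mul, ← coeff_prod_toMvPolynomial]
  by_cases hf : (∏ i, A.toMvPolynomial i).coeff (fiberCard f) = 0
  · rw [hf, zero_mul]
  · rw [h f hf, mul_zero]

theorem fiberCard_le_of_permanent_submatrix_ne_zero [DecidableEq m] [CommSemiring R] [DecidableEq R]
    {B : Matrix n m R} {f : m → n} (h : (B.submatrix f id).permanent ≠ 0) (j : n) :
    fiberCard f j ≤ #{i | B j i ≠ 0} := by
  classical
  rw [← permanent_transpose] at h
  obtain ⟨σ, -, hσ⟩ := Finset.exists_ne_zero_of_sum_ne_zero h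
  rw [fiberCard_apply]
  refine Finset.card_le_card_of_injOn σ (fun i hi => ?_) σ.injective.injOn
  obtain rfl : f i = j := by simpa using hi
  simpa using fun h0 => hσ (Finset.prod_eq_zero (Finset.mem_univ i) h0)

theorem exists_mulVec_add_ne_zero [DecidableEq m] [Fintype n] [CommRing R] [IsDomain R]
    [DecidableEq R] {A : Matrix m n R} {B : Matrix n m R} (h : (A * B).permanent ≠ 0) (c : m → R)
    {L : n → Finset R} (hL : ∀ j, #{i | B j i ≠ 0} < #(L j)) :
    ∃ x : n → R, (∀ j, x j ∈ L j) ∧ ∀ i, (A *ᵥ x + c) i ≠ 0 := by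
  obtain ⟨f, hcoeff, hf⟩ := exists_coeff_ne_zero_of_permanent_mul_ne_zero h
  have hdeg := degree_fiberCard f
  rw [← coeff_prod_add_C A.toMvPolynomial_isHomogeneous c hdeg] at hcoeff
  have totalDegree_le : (∏ i, (A.toMvPolynomial i + C (c i))).totalDegree ≤ Fintype.card m :=
    calc (∏ i, (A.toMvPolynomial i + C (c i))).totalDegree
      _ ≤ ∑ i, (A.toMvPolynomial i + C (c i)).totalDegree := totalDegree_finsetProd _ _
      _ ≤ ∑ _i : m, 1 := by
        gcongr with i
        exact (totalDegree_add _ _).trans (by simpa using A.toMvPolynomial_totalDegree_le i)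
      _ = Fintype.card m := by simp
  obtain ⟨x, hxL, hx⟩ := combinatorial_nullstellensatz_exists_eval_nonzero _ _ hcoeff
    ((totalDegree_le.trans_eq hdeg.symm).antisymm (le_totalDegree (mem_support_iff.2 hcoeff))) L
    fun j => (fiberCard_le_of_permanent_submatrix_ne_zero hf j).trans_lt (hL j)
  refine ⟨x, hxL, fun i => ?_⟩
  rw [map_prod, Finset.prod_ne_zero_iff] at hx
  simpa [toMvPolynomial_eval_eq_apply] using hx i (Finset.mem_univ i)

end Nullstellensatz

section Midpoint

theorem exists_midpoint_of_odd_card {α : Type*} [Fintype α] (h : Odd (Fintype.card α)) :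
    ∃ m : Sym2 α → α, (∀ a, m s(a, a) = a) ∧ ∀ a, Function.Injective fun b => m s(a, b) := by
  have : NeZero (Fintype.card α) := ⟨h.pos.ne'⟩
  let toZMod : α ≃ ZMod (Fintype.card α) := Fintype.equivOfCardEq (ZMod.card _).symm
  have isUnit_two : IsUnit (2 : ZMod (Fintype.card α)) := by
    exact_mod_cast (ZMod.isUnit_iff_coprime 2 _).2 (Nat.coprime_two_left.2 h)
  refine ⟨Sym2.lift ⟨fun a b => toZMod.symm (2⁻¹ * (toZMod a + toZMod b)),
    fun a b => by simp only [add_comm]⟩, fun a => ?_, fun a b c hbc => ?_⟩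
  · simp [← two_mul, ← mul_assoc, ZMod.inv_mul_of_unit _ isUnit_two]
  · have isUnit_inv : IsUnit (2⁻¹ : ZMod (Fintype.card α)) :=
      .of_mul_eq_one _ (ZMod.inv_mul_of_unit _ isUnit_two)
    simpa [isUnit_inv.mul_right_inj] using hbc

theorem exists_midpoint_of_odd_finset_card {V : Type*} {S : Finset V} (hS : Odd #S) :
    ∃ m : Sym2 V → V, ∀ v ∈ S, m s(v, v) = v ∧ Set.MapsTo (fun w => m s(v, w)) S S ∧
      Set.InjOn (fun w => m s(v, w)) S := by
  have : Nonempty S := (Finset.card_pos.1 hS.pos).to_subtype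
  obtain ⟨m, hdiag, hinj⟩ := exists_midpoint_of_odd_card (α := S) (by rwa [Fintype.card_coe])
  have retract {v : V} (hv : v ∈ S) : Function.invFun ((↑) : S → V) v = ⟨v, hv⟩ :=
    Function.leftInverse_invFun Subtype.val_injective ⟨v, hv⟩
  refine ⟨fun e => m (e.map (Function.invFun (↑))), fun v hv => ⟨?_, fun w _ => (m _).2, ?_⟩⟩
  · simp [retract hv, hdiag]
  · intro w hw w' hw' h
    simpa [retract hv, retract hw, retract hw', Subtype.val_inj, (hinj _).eq_iff] using h

end Midpoint

section ApexMap

variable {V : Type*}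

/-- `k` assigns to every edge `vw` of `G` an apex `k s(v, w)` completing it to a triangle, in such
a way that distinct edges at a common vertex have distinct apexes. -/
structure IsApexMap (G : SimpleGraph V) (k : Sym2 V → V) : Prop where
  mapsTo (v : V) : Set.MapsTo k (G.incidenceSet v) (G.neighborSet v)
  injOn (v : V) : Set.InjOn k (G.incidenceSet v)

theorem exists_isApexMap_of_odd_cliques {G : SimpleGraph V} {𝒮 : Set (Finset V)}
    (h𝒮 : ∀ S ∈ 𝒮, G.IsClique (S : Set V) ∧ Odd #S)
    (hE : ∀ e ∈ G.edgeSet, ∃! S, S ∈ 𝒮 ∧ ∀ v ∈ e, v ∈ S) : ∃ k, IsApexMap G k := by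
  have : Nonempty (Sym2 V → V) := ⟨fun e => e.out.1⟩
  choose! clique hclique using fun e he => (hE e he).exists
  choose! m hm using fun S hS => exists_midpoint_of_odd_finset_card (h𝒮 S hS).2
  let k (e : Sym2 V) : V := m (clique e) e
  have clique_eq {v w : V} {S : Finset V} (hvw : G.Adj v w) (hS : S ∈ 𝒮) (hv : v ∈ S)
      (hw : w ∈ S) : clique s(v, w) = S :=
    (hE _ hvw).unique (hclique _ hvw) ⟨hS, by simp [hv, hw]⟩
  have mem_clique {v w : V} (hvw : G.Adj v w) :
      clique s(v, w) ∈ 𝒮 ∧ v ∈ clique s(v, w) ∧ w ∈ clique s(v, w) := by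
    simpa using hclique s(v, w) hvw
  have apex_mem {v w : V} (hvw : G.Adj v w) : k s(v, w) ∈ clique s(v, w) :=
    have ⟨hS, hv, hw⟩ := mem_clique hvw
    (hm _ hS v hv).2.1 hw
  have adj_apex {v w : V} (hvw : G.Adj v w) : G.Adj v (k s(v, w)) := by
    obtain ⟨hS, hv, hw⟩ := mem_clique hvw
    obtain ⟨hdiag, -, hinj⟩ := hm _ hS v hv
    exact (h𝒮 _ hS).1 hv (apex_mem hvw) fun h => hvw.ne (hinj hv hw (hdiag.trans h))
  have clique_apex {v w : V} (hvw : G.Adj v w) : clique s(v, k s(v, w)) = clique s(v, w) :=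
    have ⟨hS, hv, _⟩ := mem_clique hvw
    clique_eq (adj_apex hvw) hS hv (apex_mem hvw)
  refine ⟨k, fun v => ?_, fun v => ?_⟩
  · rintro e ⟨he, w, rfl⟩
    exact adj_apex he
  · rintro e ⟨he, w, rfl⟩ e' ⟨he', w', rfl⟩ h
    obtain ⟨hS, hv, hw⟩ := mem_clique he
    have same_clique : clique s(v, w) = clique s(v, w') := by
      rw [← clique_apex he, h, clique_apex he']
    have hw' : w' ∈ clique s(v, w) := same_clique ▸ (mem_clique he').2.2
    simp only [k, ← same_clique] at h
    exact congrArg (s(v, ·)) ((hm _ hS v hv).2.2 hw hw' h)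

end ApexMap

section EdgeMatrices

variable {V : Type*} [DecidableEq V] (G : SimpleGraph V) (R : Type*)

/-- The matrix of the coboundary map `x ↦ (ij ↦ x i - x j)`, i.e. the transpose of an oriented
incidence matrix. The orientation of each edge is the one chosen by `Quot.out`. -/
noncomputable def coboundaryMatrix [Ring R] : Matrix G.edgeSet V R :=
  .of fun e => Pi.single e.1.out.1 1 - Pi.single e.1.out.2 1

/-- The matrix whose column at the edge `ij` is the difference of the unit vectors of the two other
edges of the triangle spanned by `ij` and its apex `k s(i, j)`, oriented as in
`coboundaryMatrix`. -/
noncomputable def apexMatrix [Ring R] (k : Sym2 V → V) : Matrix (Sym2 V) G.edgeSet R :=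
  .of fun d e => (Pi.single s(e.1.out.1, k e) 1 - Pi.single s(e.1.out.2, k e) 1 : Sym2 V → R) d

variable {G R}

theorem coboundaryMatrix_mulVec_apply [Fintype V] [Ring R] (x : V → R) (e : G.edgeSet) :
    (coboundaryMatrix G R *ᵥ x) e = x e.1.out.1 - x e.1.out.2 := by
  change (Pi.single e.1.out.1 1 - Pi.single e.1.out.2 1) ⬝ᵥ x = _
  rw [sub_dotProduct, single_one_dotProduct, single_one_dotProduct]

theorem forall_coboundaryMatrix_mulVec_ne_zero_iff [Fintype V] [Ring R] {x : V → R} :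
    (∀ e, (coboundaryMatrix G R *ᵥ x) e ≠ 0) ↔ ∀ ⦃i j⦄, G.Adj i j → x i ≠ x j := by
  simp only [coboundaryMatrix_mulVec_apply, sub_ne_zero]
  refine ⟨fun h i j hij => ?_, fun h e => h ?_⟩
  · have out_eq : s((Quot.out s(i, j)).1, (Quot.out s(i, j)).2) = s(i, j) := Quot.out_eq _
    have hne := h ⟨s(i, j), hij⟩
    rcases Sym2.eq_iff.1 out_eq with ⟨h₁, h₂⟩ | ⟨h₁, h₂⟩
    · rwa [h₁, h₂] at hne
    · rw [h₁, h₂] at hne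
      exact hne.symm
  · rw [← G.mem_edgeSet]
    convert e.2
    exact Quot.out_eq _

theorem IsApexMap.incMatrix_mul_apexMatrix [Fintype V] [DecidableRel G.Adj] [Ring R]
    {k : Sym2 V → V} (hk : IsApexMap G k) :
    G.incMatrix R * apexMatrix G R k = (coboundaryMatrix G R)ᵀ := by
  ext v e
  have adj₁ : G.Adj e.1.out.1 (k e) := hk.mapsTo _ ⟨e.2, e.1.out_fst_mem⟩
  have adj₂ : G.Adj e.1.out.2 (k e) := hk.mapsTo _ ⟨e.2, e.1.out_snd_mem⟩
  have entry : (G.incMatrix R * apexMatrix G R k) v e =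
      G.incMatrix R v s(e.1.out.1, k e) - G.incMatrix R v s(e.1.out.2, k e) := by
    simp [mul_apply, apexMatrix, mul_sub, Pi.single_apply]
  rw [entry, transpose_apply]
  simp only [SimpleGraph.incMatrix_apply', SimpleGraph.mk'_mem_incidenceSet_iff, adj₁, adj₂,
    true_and, coboundaryMatrix, of_apply, Pi.sub_apply, Pi.single_apply]
  by_cases hv : v = k e
  · simp [hv, adj₁.ne', adj₂.ne']
  · simp [hv]

theorem IsApexMap.card_apexMatrix_ne_zero_le_two [Fintype G.edgeSet] [Ring R] [DecidableEq R]
    {k : Sym2 V → V} (hk : IsApexMap G k) (d : Sym2 V) :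
    #{e | apexMatrix G R k d e ≠ 0} ≤ 2 := by
  let edgesWithApex (v w : V) : Finset G.edgeSet := {e | v ∈ e.1 ∧ k e = w}
  have card_le_one (v w : V) : #(edgesWithApex v w) ≤ 1 := by
    simp only [edgesWithApex, Finset.card_le_one, Finset.mem_filter, Finset.mem_univ, true_and]
    rintro e ⟨hv, hw⟩ e' ⟨hv', hw'⟩
    exact Subtype.ext (hk.injOn v ⟨e.2, hv⟩ ⟨e'.2, hv'⟩ (hw.trans hw'.symm))
  have exists_of_ne_zero {e : G.edgeSet} (h : apexMatrix G R k d e ≠ 0) :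
      ∃ v ∈ e.1, d = s(v, k e) := by
    contrapose! h
    simp [apexMatrix, h _ e.1.out_fst_mem, h _ e.1.out_snd_mem]
  induction d with | h v w
  calc #{e | apexMatrix G R k s(v, w) e ≠ 0}
    _ ≤ #(edgesWithApex v w ∪ edgesWithApex w v) := by
      refine Finset.card_le_card fun e he => ?_
      obtain ⟨u, hu, huk⟩ := exists_of_ne_zero (Finset.mem_filter.1 he).2
      rcases Sym2.eq_iff.1 huk with ⟨rfl, rfl⟩ | ⟨rfl, rfl⟩ <;> simp [edgesWithApex, hu]
    _ ≤ 1 + 1 := (Finset.card_union_le _ _).trans (add_le_add (card_le_one v w) (card_le_one w v))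

end EdgeMatrices

section Choosability

variable {V : Type*} [Fintype V] [DecidableEq V] {G : SimpleGraph V} [DecidableRel G.Adj]

theorem properTotalWeighting_iff {fv : V → ℝ} {fe : Sym2 V → ℝ} :
    ProperTotalWeighting G fv fe ↔
      ∀ e, (coboundaryMatrix G ℝ *ᵥ (fv + G.incMatrix ℝ *ᵥ fe)) e ≠ 0 := by
  have incMatrix_mulVec (v : V) : (G.incMatrix ℝ *ᵥ fe) v = ∑ e ∈ G.incidenceFinset v, fe e := by
    simp only [mulVec, dotProduct, SimpleGraph.incMatrix_apply', ite_mul, one_mul, zero_mul,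
      ← Finset.sum_filter]
    exact Finset.sum_congr (by ext; simp) fun _ _ => rfl
  simp only [forall_coboundaryMatrix_mulVec_ne_zero_iff, Pi.add_apply, incMatrix_mulVec,
    ProperTotalWeighting]

theorem permanent_coboundaryMatrix_mul_transpose_self_pos :
    0 < (coboundaryMatrix G ℝ * (coboundaryMatrix G ℝ)ᵀ).permanent := by
  obtain ⟨x, hx⟩ := Countable.exists_injective_nat V
  refine permanent_mul_transpose_self_pos _ (fun v => (x v : ℝ)) ?_
  exact forall_coboundaryMatrix_mulVec_ne_zero_iff.2 fun i j hij =>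
    (Nat.cast_injective.comp hx).ne hij.ne

theorem IsApexMap.totalWeightChoosable {k : Sym2 V → V} (hk : IsApexMap G k) :
    TotalWeightChoosable G 1 3 := by
  intro Lv Le hLv hLe
  choose fv hfv using fun v => Finset.card_pos.1 ((hLv v).symm ▸ one_pos)
  -- `incMatrix` has a column for every element of `Sym2 V`, so non-edges need lists as well.
  obtain ⟨L, hL, hLLe⟩ : ∃ L : Sym2 V → Finset ℝ,
      (∀ e, #(L e) = 3) ∧ ∀ e ∈ G.edgeFinset, L e = Le e := by
    obtain ⟨T, hT⟩ := Infinite.exists_subset_card_eq ℝ 3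
    refine ⟨fun e => if e ∈ G.edgeFinset then Le e else T, fun e => ?_, fun e he => if_pos he⟩
    dsimp only
    split_ifs with he
    exacts [hLe e he, hT]
  have permanent_ne_zero :
      (coboundaryMatrix G ℝ * G.incMatrix ℝ * apexMatrix G ℝ k).permanent ≠ 0 := by
    rw [Matrix.mul_assoc, hk.incMatrix_mul_apexMatrix]
    exact permanent_coboundaryMatrix_mul_transpose_self_pos.ne'
  obtain ⟨fe, hfe, hne⟩ := exists_mulVec_add_ne_zero permanent_ne_zero (coboundaryMatrix G ℝ *ᵥ fv)
    fun e => calc #{a | apexMatrix G ℝ k e a ≠ 0}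
      _ ≤ 2 := hk.card_apexMatrix_ne_zero_le_two e
      _ < #(L e) := by simp [hL e]
  refine ⟨fv, fe, hfv, fun e he => hLLe e he ▸ hfe e, properTotalWeighting_iff.2 fun e => ?_⟩
  rw [add_comm, mulVec_add, mulVec_mulVec]
  exact hne e

end Choosability

/-- If a finite simple graph without isolated edges has its edge set partitioned into the
edge sets of complete subgraphs of odd order, then it is total weight `(1,3)`-choosable. -/
theorem dense_eulerian_stmt0 {V : Type*} [Fintype V] [DecidableEq V] (G : SimpleGraph V)
    [DecidableRel G.Adj]
    (hnice : ∀ ⦃i j : V⦄, G.Adj i j → 2 ≤ G.degree i ∨ 2 ≤ G.degree j)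
    (hdecomp : ∃ 𝒮 : Finset (Finset V),
      (∀ S ∈ 𝒮, G.IsClique (S : Set V) ∧ Odd S.card) ∧
      (∀ e ∈ G.edgeFinset, ∃! S, S ∈ 𝒮 ∧ ∀ v ∈ e, v ∈ S)) :
    TotalWeightChoosable G 1 3 := by
  obtain ⟨𝒮, h𝒮, hE⟩ := hdecomp
  obtain ⟨k, hk⟩ := exists_isApexMap_of_odd_cliques (𝒮 := 𝒮) h𝒮 fun e he =>
    hE e (G.mem_edgeFinset.2 he)
  exact hk.totalWeightChoosable
end

section
/- There exists n₀ such that every Eulerian graph G on n ≥ n₀ vertices (i.e., G is connected and every vertex has even degree) with minimum degree at least 0.91 n is total weight (1,3)-choosable. -/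
section DegreeAlong

open MvPolynomial Matrix

variable {σ ι R : Type*} [CommSemiring R]

/-- The substitution `f ↦ f (X + t h)`, as a polynomial in `t` with coefficients in the ring of
polynomials in `X`. -/
noncomputable def lineShift (h : σ → R) :
    MvPolynomial σ R →ₐ[R] Polynomial (MvPolynomial σ R) :=
  aeval fun v => Polynomial.C (X v) + Polynomial.C (C (h v)) * Polynomial.X

/-- The degree of `f` along the direction `h`: the degree in `t` of `f (X + t h)`, where the base
point `X` is generic. -/
noncomputable def degreeAlong (h : σ → R) (f : MvPolynomial σ R) : ℕ :=
  (lineShift h f).natDegree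

lemma lineShift_X (h : σ → R) (v : σ) :
    lineShift h (X v) = Polynomial.C (X v) + Polynomial.C (C (h v)) * Polynomial.X :=
  aeval_X _ _

lemma eval_eval_lineShift (h x : σ → R) (t : R) (f : MvPolynomial σ R) :
    eval x ((lineShift h f).eval (C t)) = eval (x + t • h) f := by
  induction f using MvPolynomial.induction_on with
  | C r => simp
  | add p q hp hq => simp [hp, hq]
  | mul_X p v hp => simp [hp, lineShift_X, mul_comm t]

lemma coeff_zero_lineShift (h : σ → R) (f : MvPolynomial σ R) : (lineShift h f).coeff 0 = f := by
  induction f using MvPolynomial.induction_on with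
  | C r => simp
  | add p q hp hq => simp [hp, hq]
  | mul_X p v hp => simp [hp, lineShift_X, Polynomial.mul_coeff_zero]

lemma lineShift_ne_zero (h : σ → R) {f : MvPolynomial σ R} (hf : f ≠ 0) : lineShift h f ≠ 0 :=
  fun h0 => hf (by rw [← coeff_zero_lineShift h f, h0, Polynomial.coeff_zero])

lemma degreeAlong_mul [NoZeroDivisors R] (h : σ → R) {f g : MvPolynomial σ R} (hf : f ≠ 0)
    (hg : g ≠ 0) : degreeAlong h (f * g) = degreeAlong h f + degreeAlong h g := by
  rw [degreeAlong, map_mul,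
    Polynomial.natDegree_mul (lineShift_ne_zero h hf) (lineShift_ne_zero h hg)]
  rfl

lemma degreeAlong_sub_le {R : Type*} [CommRing R] (h : σ → R) {f g : MvPolynomial σ R} {n : ℕ}
    (hf : degreeAlong h f ≤ n) (hg : degreeAlong h g ≤ n) : degreeAlong h (f - g) ≤ n := by
  rw [degreeAlong, map_sub]
  exact (Polynomial.natDegree_sub_le _ _).trans (max_le hf hg)

lemma degreeAlong_prod_le (h : σ → R) (s : Finset ι) (f : ι → MvPolynomial σ R) :
    degreeAlong h (∏ i ∈ s, f i) ≤ ∑ i ∈ s, degreeAlong h (f i) := by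
  rw [degreeAlong, map_prod]
  exact Polynomial.natDegree_prod_le _ _

lemma eq_C_of_forall_degreeAlong_eq_zero {R : Type*} [CommRing R] [IsDomain R] [Infinite R]
    {f : MvPolynomial σ R} (hf : ∀ h, degreeAlong h f = 0) : f = C (constantCoeff f) := by
  refine MvPolynomial.funext fun h => ?_
  have hconst : lineShift h f = Polynomial.C f := by
    rw [Polynomial.eq_C_of_natDegree_eq_zero (hf h), coeff_zero_lineShift]
  simpa [hconst, eq_comm] using eval_eval_lineShift h 0 1 f

lemma degreeAlong_le_countP_degrees [DecidableEq R] (h : σ → R) (f : MvPolynomial σ R) :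
    degreeAlong h f ≤ f.degrees.countP fun v => h v ≠ 0 := by
  classical
  rw [degreeAlong, lineShift, aeval_def, eval₂_eq]
  refine Polynomial.natDegree_sum_le_of_forall_le _ _ fun m hm => ?_
  have hX (v : σ) : (Polynomial.C (X v) + Polynomial.C (C (h v)) * Polynomial.X :
      Polynomial (MvPolynomial σ R)).natDegree ≤ if h v ≠ 0 then 1 else 0 := by
    split_ifs with hv
    · rw [add_comm]
      exact Polynomial.natDegree_linear_le
    · simp [not_not.1 hv]
  calc _ ≤ ∑ v ∈ m.support, m v * if h v ≠ 0 then 1 else 0 := by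
        refine (Polynomial.natDegree_C_mul_le _ _).trans <|
          (Polynomial.natDegree_prod_le _ _).trans ?_
        exact Finset.sum_le_sum fun v _ => Polynomial.natDegree_pow_le_of_le _ (hX v)
    _ = (Finsupp.toMultiset m).countP fun v => h v ≠ 0 := by
        rw [Finsupp.toMultiset_apply, Finsupp.sum, ← Multiset.coe_countPAddMonoidHom, map_sum]
        refine Finset.sum_congr rfl fun v _ => ?_
        by_cases hv : h v = 0 <;> simp [← Multiset.cons_zero, hv]
    _ ≤ _ := Multiset.countP_le_of_le _ (by rw [degrees_def]; exact Finset.le_sup hm)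

variable [Fintype σ]

lemma lineShift_toMvPolynomial (h : σ → R) (A : Matrix ι σ R) (i : ι) :
    lineShift h (A.toMvPolynomial i) =
      Polynomial.C (A.toMvPolynomial i) + Polynomial.C (C ((A *ᵥ h) i)) * Polynomial.X := by
  simp only [toMvPolynomial, ← C_mul_X_eq_monomial, map_sum, map_mul, lineShift_X, algHom_C,
    Polynomial.algebraMap_apply, algebraMap_eq, mulVec, dotProduct, mul_add,
    Finset.sum_add_distrib, Finset.sum_mul, mul_assoc]

lemma degreeAlong_toMvPolynomial [DecidableEq R] (h : σ → R) (A : Matrix ι σ R) (i : ι) :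
    degreeAlong h (A.toMvPolynomial i) = if (A *ᵥ h) i ≠ 0 then 1 else 0 := by
  rw [degreeAlong, lineShift_toMvPolynomial, add_comm]
  split_ifs with hi
  · exact Polynomial.natDegree_linear ((map_ne_zero_iff _ (C_injective σ R)).2 hi)
  · simp [not_not.1 hi]

lemma degreeAlong_bind₁_toMvPolynomial_le (h : σ → R) (A : Matrix ι σ R) (p : MvPolynomial ι R) :
    degreeAlong h (bind₁ A.toMvPolynomial p) ≤ degreeAlong (A *ᵥ h) p := by
  have hcomp : (lineShift h).comp (bind₁ A.toMvPolynomial) =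
      (Polynomial.mapAlgHom (bind₁ A.toMvPolynomial)).comp (lineShift (A *ᵥ h)) := by
    ext1 i
    simp [lineShift_toMvPolynomial, lineShift_X]
  have hp : lineShift h (bind₁ A.toMvPolynomial p) =
      (lineShift (A *ᵥ h) p).map (bind₁ A.toMvPolynomial : MvPolynomial ι R →+* _) :=
    DFunLike.congr_fun hcomp p
  rw [degreeAlong, hp]
  exact Polynomial.natDegree_map_le

end DegreeAlong

section LinearForms

open MvPolynomial Matrix

variable {σ ι K : Type*} [Fintype σ]

lemma toMvPolynomial_ne_zero [CommSemiring K] {A : Matrix ι σ K} {i : ι} (hi : A i ≠ 0) :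
    A.toMvPolynomial i ≠ 0 := by
  classical
  obtain ⟨v, hv⟩ := Function.ne_iff.1 hi
  intro h0
  have heval := toMvPolynomial_eval_eq_apply A i (Pi.single v 1)
  rw [h0, map_zero, mulVec_single_one] at heval
  exact hv heval.symm

lemma mulVec_apply_eq_zero_of_row_eq_zero [NonUnitalNonAssocSemiring K] {A : Matrix ι σ K}
    {i : ι} (hi : A i = 0) (h : σ → K) : (A *ᵥ h) i = 0 :=
  (congrArg (· ⬝ᵥ h) hi).trans (zero_dotProduct h)

lemma dvd_sub_bind₁ {τ S : Type*} [CommRing S] {d : MvPolynomial τ S} {g : τ → MvPolynomial τ S}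
    (hg : ∀ v, d ∣ X v - g v) (f : MvPolynomial τ S) : d ∣ f - bind₁ g f := by
  induction f using MvPolynomial.induction_on with
  | C r => simp
  | add p q hp hq =>
    rw [map_add, add_sub_add_comm]
    exact dvd_add hp hq
  | mul_X p v hp =>
    rw [map_mul, bind₁_X_right, show p * X v - bind₁ g p * g v =
      (p - bind₁ g p) * X v + bind₁ g p * (X v - g v) by ring]
    exact dvd_add (hp.mul_right _) ((hg v).mul_left _)

lemma degreeAlong_bind₁_toMvPolynomial_le_countP [CommSemiring K] [DecidableEq K] (h : σ → K)
    (A : Matrix ι σ K) {M : Multiset ι} {p : MvPolynomial ι K} (hp : p.degrees ≤ M) :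
    degreeAlong h (bind₁ A.toMvPolynomial p) ≤ M.countP fun i => (A *ᵥ h) i ≠ 0 :=
  (degreeAlong_bind₁_toMvPolynomial_le h A p).trans <|
    (degreeAlong_le_countP_degrees _ p).trans (Multiset.countP_le_of_le _ hp)

lemma degreeAlong_le_countP_of_toMvPolynomial_mul [CommSemiring K] [NoZeroDivisors K]
    [DecidableEq K] {h : σ → K} {A : Matrix ι σ K} {j : ι} (hj : A j ≠ 0)
    {M : Multiset ι} {q : MvPolynomial σ K}
    (hq : degreeAlong h (A.toMvPolynomial j * q) ≤
      (j ::ₘ M).countP fun i => (A *ᵥ h) i ≠ 0) :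
    degreeAlong h q ≤ M.countP fun i => (A *ᵥ h) i ≠ 0 := by
  by_cases hq0 : q = 0
  · simp [hq0, degreeAlong]
  rw [degreeAlong_mul h (toMvPolynomial_ne_zero hj) hq0, degreeAlong_toMvPolynomial,
    Multiset.countP_cons] at hq
  omega

variable [Field K]

lemma exists_mul_row_eq_zero_and_dvd_sub_bind₁ {A : Matrix ι σ K} {j : ι} (hj : A j ≠ 0) :
    ∃ P : Matrix σ σ K, (A * P) j = 0 ∧
      ∀ f, A.toMvPolynomial j ∣ f - bind₁ P.toMvPolynomial f := by
  classical
  obtain ⟨w, hw⟩ : ∃ w, A j ⬝ᵥ w = 1 := by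
    obtain ⟨v, hv⟩ := Function.ne_iff.1 hj
    exact ⟨Pi.single v (A j v)⁻¹, by rw [dotProduct_single, mul_inv_cancel₀ hv]⟩
  -- the projection along `w` onto the kernel of the `j`-th row
  refine ⟨1 - vecMulVec w (A j), ?_, dvd_sub_bind₁ fun u => ⟨C (w u), ?_⟩⟩
  · change A j ᵥ* (1 - vecMulVec w (A j)) = 0
    rw [vecMul_sub, vecMul_one, vecMul_vecMulVec, hw, one_smul, sub_self]
  · rw [← congrFun (toMvPolynomial_one (R := K)) u]
    simp only [toMvPolynomial, Matrix.sub_apply, vecMulVec_apply, map_sub, map_mul,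
      ← C_mul_X_eq_monomial, ← Finset.sum_sub_distrib, Finset.sum_mul]
    exact Finset.sum_congr rfl fun v _ => by ring

theorem exists_degrees_le_bind₁_toMvPolynomial_eq [Infinite K] [DecidableEq K] (A : Matrix ι σ K)
    (M : Multiset ι) {f : MvPolynomial σ K}
    (hf : ∀ h, degreeAlong h f ≤ M.countP fun i => (A *ᵥ h) i ≠ 0) :
    ∃ p : MvPolynomial ι K, p.degrees ≤ M ∧ bind₁ A.toMvPolynomial p = f := by
  classical
  induction M using Multiset.induction_on generalizing A f with
  | empty =>
    refine ⟨C (constantCoeff f), (degrees_C _).le, ?_⟩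
    rw [bind₁_C_right, ← eq_C_of_forall_degreeAlong_eq_zero fun h => Nat.le_zero.1 (hf h)]
  | cons j M ih =>
    by_cases hj : A j = 0
    · obtain ⟨p, hpM, hp⟩ := ih A fun h => by
        have hjh := mulVec_apply_eq_zero_of_row_eq_zero hj h
        rw [← Multiset.countP_cons_of_neg M (not_not.2 hjh)]
        exact hf h
      exact ⟨p, hpM.trans (Multiset.le_cons_self M j), hp⟩
    -- On the kernel of the row `j`, `f` agrees with a polynomial `g` in the other forms, so `f - g`
    -- is a multiple of the form `j`; the quotient again satisfies the degree bounds for `M`.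
    obtain ⟨P, hPj, hdvd⟩ := exists_mul_row_eq_zero_and_dvd_sub_bind₁ hj
    obtain ⟨p, hpM, hp⟩ := ih (A * P) (f := bind₁ P.toMvPolynomial f) fun h => by
      refine (degreeAlong_bind₁_toMvPolynomial_le h P f).trans ?_
      have hPjh := mulVec_apply_eq_zero_of_row_eq_zero hPj h
      rw [← Multiset.countP_cons_of_neg M (not_not.2 hPjh), ← mulVec_mulVec]
      exact hf (P *ᵥ h)
    set g := bind₁ A.toMvPolynomial p with hg
    have hPg : bind₁ P.toMvPolynomial g = bind₁ P.toMvPolynomial f := by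
      rw [hg, bind₁_bind₁, ← hp, funext (toMvPolynomial_mul A P)]
    obtain ⟨q, hq⟩ : A.toMvPolynomial j ∣ f - g := by
      simpa [hPg] using hdvd (f - g)
    have hqdeg (h : σ → K) : degreeAlong h q ≤ M.countP fun i => (A *ᵥ h) i ≠ 0 :=
      degreeAlong_le_countP_of_toMvPolynomial_mul hj <| by
        rw [← hq]
        exact degreeAlong_sub_le h (hf h)
          (degreeAlong_bind₁_toMvPolynomial_le_countP h A (hpM.trans (Multiset.le_cons_self M j)))
    obtain ⟨r, hrM, hr⟩ := ih A hqdeg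
    refine ⟨p + X j * r, ?_, ?_⟩
    · refine degrees_add_le.trans (sup_le (hpM.trans (Multiset.le_cons_self M j)) ?_)
      rw [← Multiset.singleton_add]
      exact degrees_mul_le.trans (add_le_add (degrees_X' j) hrM)
    · rw [map_add, map_mul, bind₁_X_right, hr, ← hq, ← hg, add_sub_cancel]

end LinearForms

section Apolar

open MvPolynomial Matrix
open scoped Nat

variable {V E R : Type*} [CommSemiring R]

lemma constantCoeff_bind₁_toMvPolynomial [Fintype E] (N : Matrix V E R) (q : MvPolynomial V R) :
    constantCoeff (bind₁ N.toMvPolynomial q) = constantCoeff q := by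
  induction q using MvPolynomial.induction_on with
  | C r => simp
  | add q₁ q₂ h₁ h₂ => simp only [map_add, h₁, h₂]
  | mul_X q v _ => simp

lemma pderiv_bind₁_toMvPolynomial [Fintype V] [Fintype E] (N : Matrix V E R) (e : E)
    (q : MvPolynomial V R) :
    pderiv e (bind₁ N.toMvPolynomial q) =
      bind₁ N.toMvPolynomial (∑ v, N v e • pderiv v q) := by
  classical
  induction q using MvPolynomial.induction_on with
  | C r => simp
  | add q₁ q₂ h₁ h₂ => simp only [map_add, h₁, h₂, smul_add, Finset.sum_add_distrib]
  | mul_X q v hq =>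
    have hlin : pderiv e (N.toMvPolynomial v) = C (N v e) := by
      simp [toMvPolynomial, ← C_mul_X_eq_monomial, pderiv_X, Pi.single_apply]
    have hleibniz : ∑ u, N u e • pderiv u (q * X v) =
        (∑ u, N u e • pderiv u q) * X v + q * C (N v e) := by
      simp only [pderiv_mul, smul_add, Finset.sum_add_distrib, Finset.sum_mul, smul_mul_assoc]
      congr 1
      simp [pderiv_X, Pi.single_apply, smul_eq_C_mul, mul_comm]
    rw [hleibniz, map_mul, pderiv_mul, hq, bind₁_X_right, hlin, map_add, map_mul, map_mul,
      bind₁_X_right, bind₁_C_right]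

variable [Fintype V]

/-- The apolar (Bombieri) pairing `∑ m, m! * coeff m p * coeff m q`, where `m! = ∏ v, (m v)!`.
Under it multiplication by a variable is adjoint to the partial derivative in that variable. -/
noncomputable def apolar (V R : Type*) [Fintype V] [CommSemiring R] :
    LinearMap.BilinForm R (MvPolynomial V R) :=
  (basisMonomials V R).constr R fun m => ((∏ v, (m v)! : ℕ) : R) • lcoeff R m

lemma apolar_monomial (m : V →₀ ℕ) (r : R) (q : MvPolynomial V R) :
    apolar V R (monomial m r) q = r * ((∏ v, (m v)! : ℕ) * coeff m q) := by
  have hr : monomial m r = r • basisMonomials V R m := by simp [smul_monomial]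
  rw [hr, map_smul, apolar, Module.Basis.constr_basis]
  rfl

lemma apolar_eq_sum (p q : MvPolynomial V R) :
    apolar V R p q = ∑ m ∈ p.support, coeff m p * ((∏ v, (m v)! : ℕ) * coeff m q) := by
  conv_lhs => rw [p.as_sum, map_sum, LinearMap.sum_apply]
  simp only [apolar_monomial]

lemma apolar_self_pos {K : Type*} [CommRing K] [LinearOrder K] [IsStrictOrderedRing K]
    {p : MvPolynomial V K} (hp : p ≠ 0) : 0 < apolar V K p p := by
  rw [apolar_eq_sum]
  refine Finset.sum_pos (fun m hm => ?_) (support_nonempty.2 hp)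
  have hfact : (0 : K) < (∏ v, (m v)! : ℕ) :=
    Nat.cast_pos.2 (Finset.prod_pos fun v _ => Nat.factorial_pos (m v))
  rw [mul_left_comm]
  exact mul_pos hfact (mul_self_pos.2 (mem_support_iff.1 hm))

lemma prod_factorial_add_single (m : V →₀ ℕ) (u : V) :
    ∏ v, ((m + Finsupp.single u 1 : V →₀ ℕ) v)! = (m u + 1) * ∏ v, (m v)! := by
  classical
  rw [← Finset.mul_prod_erase _ _ (Finset.mem_univ u),
    ← Finset.mul_prod_erase _ (fun v => (m v)!) (Finset.mem_univ u), ← mul_assoc]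
  congr 1
  · simp [Nat.factorial_succ]
  · refine Finset.prod_congr rfl fun v hv => ?_
    simp [(Finset.ne_of_mem_erase hv).symm]

lemma apolar_X_mul (u : V) (p q : MvPolynomial V R) :
    apolar V R (X u * p) q = apolar V R p (pderiv u q) := by
  classical
  induction p using MvPolynomial.induction_on' with
  | add p₁ p₂ h₁ h₂ => simp only [mul_add, map_add, LinearMap.add_apply, h₁, h₂]
  | monomial m r =>
    rw [X, monomial_mul, one_mul, add_comm, apolar_monomial, apolar_monomial, coeff_pderiv,
      prod_factorial_add_single]
    push_cast
    ring

lemma apolar_toMvPolynomial_mul (B : Matrix E V R) (e : E) (p q : MvPolynomial V R) :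
    apolar V R (B.toMvPolynomial e * p) q = apolar V R p (∑ v, B e v • pderiv v q) := by
  simp only [toMvPolynomial, ← C_mul_X_eq_monomial, C_mul', Finset.sum_mul, smul_mul_assoc, map_sum,
    map_smul, LinearMap.sum_apply, LinearMap.smul_apply, apolar_X_mul]

lemma apolar_bind₁_toMvPolynomial [Fintype E] (B : Matrix E V R) (p : MvPolynomial E R)
    (q : MvPolynomial V R) :
    apolar V R (bind₁ B.toMvPolynomial p) q = apolar E R p (bind₁ Bᵀ.toMvPolynomial q) := by
  induction p using MvPolynomial.induction_on generalizing q with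
  | C r =>
    rw [bind₁_C_right, C_apply, C_apply, apolar_monomial, apolar_monomial, ← constantCoeff_eq,
      ← constantCoeff_eq, constantCoeff_bind₁_toMvPolynomial]
    simp
  | add p₁ p₂ h₁ h₂ => simp only [map_add, LinearMap.add_apply, h₁, h₂]
  | mul_X p e hp =>
    rw [mul_comm, map_mul, bind₁_X_right, apolar_toMvPolynomial_mul, hp, apolar_X_mul,
      pderiv_bind₁_toMvPolynomial]
    rfl

end Apolar

section Nonvanishing

open MvPolynomial Matrix

variable {V E ι K : Type*}

lemma coeff_prod_add_C_s1 [CommSemiring K] {s : Finset ι} {l : ι → MvPolynomial E K}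
    (hl : ∀ i ∈ s, (l i).IsHomogeneous 1) (c : ι → K) {m : E →₀ ℕ} (hm : m.degree = s.card) :
    coeff m (∏ i ∈ s, (l i + C (c i))) = coeff m (∏ i ∈ s, l i) := by
  classical
  rw [Finset.prod_add, coeff_sum, Finset.sum_eq_single_of_mem s (Finset.mem_powerset_self s)]
  · simp
  intro t ht hts
  rw [Finset.mem_powerset] at ht
  have hhom : ((∏ i ∈ t, l i) * ∏ i ∈ s \ t, C (c i)).IsHomogeneous t.card := by
    simpa using (IsHomogeneous.prod t l (fun _ => 1) fun i hi => hl i (ht hi)).mul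
      (IsHomogeneous.prod (s \ t) (fun i => C (c i)) (fun _ => 0) fun i _ => isHomogeneous_C _ _)
  refine hhom.coeff_eq_zero ?_
  rw [hm]
  exact (Finset.card_lt_card (ht.ssubset_of_ne hts)).ne'

variable [Fintype V] [Fintype E] [Field K] [LinearOrder K] [IsStrictOrderedRing K]

lemma exists_coeff_bind₁_toMvPolynomial_ne_zero (N : Matrix V E K) (M : Multiset E)
    {Q : MvPolynomial V K} (hQ : Q ≠ 0)
    (hdeg : ∀ h, degreeAlong h Q ≤ M.countP fun e => (h ᵥ* N) e ≠ 0) :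
    ∃ m : E →₀ ℕ, Finsupp.toMultiset m ≤ M ∧ coeff m (bind₁ N.toMvPolynomial Q) ≠ 0 := by
  classical
  obtain ⟨p, hpM, hp⟩ := exists_degrees_le_bind₁_toMvPolynomial_eq Nᵀ M (f := Q) (by
    simpa only [mulVec_transpose] using hdeg)
  have hpos : 0 < apolar E K p (bind₁ N.toMvPolynomial Q) := by
    rw [← transpose_transpose N, ← apolar_bind₁_toMvPolynomial, hp]
    exact apolar_self_pos hQ
  rw [apolar_eq_sum] at hpos
  obtain ⟨m, hm, hne⟩ := Finset.exists_ne_zero_of_sum_ne_zero hpos.ne'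
  refine ⟨m, le_trans ?_ hpM, right_ne_zero_of_mul (right_ne_zero_of_mul hne)⟩
  rw [degrees_def]
  exact Finset.le_sup hm

theorem exists_forall_mulVec_mulVec_ne [DecidableEq E] (D : Matrix ι V K) (N : Matrix V E K)
    {s : Finset ι} {M : Multiset E} (hD : ∀ i ∈ s, D i ≠ 0)
    (hDN : ∀ h, (s.filter fun i => (D *ᵥ h) i ≠ 0).card ≤ M.countP fun e => (h ᵥ* N) e ≠ 0)
    (c : ι → K) {L : E → Finset K} (hL : ∀ e, M.count e < (L e).card) :
    ∃ x : E → K, (∀ e, x e ∈ L e) ∧ ∀ i ∈ s, (D *ᵥ (N *ᵥ x)) i ≠ c i := by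
  classical
  set l := (D * N).toMvPolynomial with hl
  have hlin (i : ι) : (l i).IsHomogeneous 1 := toMvPolynomial_isHomogeneous _ i
  obtain ⟨m, hmM, hm⟩ : ∃ m : E →₀ ℕ, Finsupp.toMultiset m ≤ M ∧ coeff m (∏ i ∈ s, l i) ≠ 0 := by
    simp only [hl, toMvPolynomial_mul, ← map_prod]
    refine exists_coeff_bind₁_toMvPolynomial_ne_zero N M
      (Finset.prod_ne_zero_iff.2 fun i hi => toMvPolynomial_ne_zero (hD i hi)) fun h => ?_
    refine (degreeAlong_prod_le h s _).trans ?_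
    simpa only [degreeAlong_toMvPolynomial, ← Finset.card_filter] using hDN h
  have hmdeg : m.degree = s.card := by
    by_contra hne
    exact hm ((IsHomogeneous.prod s l (fun _ => 1) fun i _ => hlin i).coeff_eq_zero (by simpa))
  set P := ∏ i ∈ s, (l i + C (-c i)) with hP
  have hPm : coeff m P ≠ 0 := by rwa [hP, coeff_prod_add_C_s1 (fun i _ => hlin i) _ hmdeg]
  have hPdeg : P.totalDegree = m.degree := by
    refine le_antisymm ?_ (le_totalDegree (mem_support_iff.2 hPm))
    rw [hmdeg, Finset.card_eq_sum_ones]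
    refine (totalDegree_finsetProd _ _).trans (Finset.sum_le_sum fun i _ => ?_)
    exact (totalDegree_add _ _).trans (max_le (hlin i).totalDegree_le (by simp))
  obtain ⟨x, hxL, hx⟩ := combinatorial_nullstellensatz_exists_eval_nonzero P m hPm hPdeg L
    fun e => by
      rw [← Finsupp.count_toMultiset]
      exact (Multiset.count_le_of_le e hmM).trans_lt (hL e)
  refine ⟨x, hxL, fun i hi heq => hx ?_⟩
  rw [hP, map_prod]
  refine Finset.prod_eq_zero hi ?_
  rw [map_add, hl, toMvPolynomial_eval_eq_apply, ← mulVec_mulVec, heq, eval_C, add_neg_cancel]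

end Nonvanishing

section WeightChoosability

open Matrix Finset

variable {V : Type*}

/-- The oriented incidence matrix of the complete graph on `V`, with one row for each unordered
pair: the row of `s(u, v)` has entries `1` and `-1` at `u` and `v`, the signs being given by
`Quot.out`. The row of a diagonal element of `Sym2 V` is zero. -/
noncomputable def signedIncMatrix (V R : Type*) [DecidableEq V] [Ring R] : Matrix (Sym2 V) V R :=
  fun e => Pi.single e.out.1 1 - Pi.single e.out.2 1

section SignedIncMatrix

variable {R : Type*} [DecidableEq V] [Ring R]

lemma signedIncMatrix_mulVec_ne_zero_iff [Fintype V] (h : V → R) (u v : V) :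
    (signedIncMatrix V R *ᵥ h) s(u, v) ≠ 0 ↔ h u ≠ h v := by
  have hdiff : (signedIncMatrix V R *ᵥ h) s(u, v) =
      h (Quot.out s(u, v)).1 - h (Quot.out s(u, v)).2 := by
    change (Pi.single _ 1 - Pi.single _ 1) ⬝ᵥ h = _
    rw [sub_dotProduct, single_one_dotProduct, single_one_dotProduct]
  rw [hdiff, sub_ne_zero]
  have hout : s((Quot.out s(u, v)).1, (Quot.out s(u, v)).2) = s(u, v) := Quot.out_eq _
  rcases Sym2.eq_iff.1 hout with ⟨hu, hv⟩ | ⟨hv, hu⟩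
  · rw [hu, hv]
  · rw [hu, hv, ne_comm]

lemma signedIncMatrix_row_ne_zero [Nontrivial R] {u v : V} (huv : u ≠ v) :
    signedIncMatrix V R s(u, v) ≠ 0 := by
  intro hrow
  have hout : s((Quot.out s(u, v)).1, (Quot.out s(u, v)).2) = s(u, v) := Quot.out_eq _
  have hne : (Quot.out s(u, v)).1 ≠ (Quot.out s(u, v)).2 := fun heq =>
    huv (Sym2.mk_isDiag_iff.1 (hout ▸ Sym2.mk_isDiag_iff.2 heq))
  simpa [signedIncMatrix, hne] using congrFun hrow (Quot.out s(u, v)).1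

end SignedIncMatrix

variable [Fintype V] (G : SimpleGraph V) [DecidableRel G.Adj]

lemma sum_card_filter_neighborFinset (p : Sym2 V → Prop) [DecidablePred p] :
    ∑ u, #{v ∈ G.neighborFinset u | p s(u, v)} = 2 * #{e ∈ G.edgeFinset | p e} := by
  classical
  have hdeg (u : V) : (G.deleteEdges {e | ¬ p e}).degree u =
      #{v ∈ G.neighborFinset u | p s(u, v)} := by
    rw [← SimpleGraph.card_neighborFinset_eq_degree]
    congr 1
    ext v
    simp
  have hedge : (G.deleteEdges {e | ¬ p e}).edgeFinset = {e ∈ G.edgeFinset | p e} := by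
    ext e
    simp
  rw [← hedge, ← SimpleGraph.sum_degrees_eq_twice_card_edges]
  exact sum_congr rfl fun u _ => (hdeg u).symm

variable [DecidableEq V]

lemma incMatrix_mulVec_apply {R : Type*} [NonAssocSemiring R] (x : Sym2 V → R) (v : V) :
    (G.incMatrix R *ᵥ x) v = ∑ e ∈ G.incidenceFinset v, x e := by
  simp only [mulVec, dotProduct, SimpleGraph.incMatrix_apply', ite_mul, one_mul, zero_mul,
    ← sum_filter]
  exact sum_congr (by ext; simp) fun _ _ => rfl

lemma vecMul_incMatrix_mk {R : Type*} [NonAssocSemiring R] {u v : V} (huv : G.Adj u v)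
    (h : V → R) : (h ᵥ* G.incMatrix R) s(u, v) = h u + h v := by
  have hset : ({w | s(u, v) ∈ G.incidenceSet w} : Finset V) = {u, v} := by
    ext w
    simp [SimpleGraph.mk'_mem_incidenceSet_iff, huv]
  simp only [vecMul, dotProduct, SimpleGraph.incMatrix_apply', mul_ite, mul_one, mul_zero,
    ← sum_filter, hset, sum_pair huv.ne]

lemma two_mul_card_filter_signedIncMatrix_mulVec_ne_zero {R : Type*} [Ring R] [DecidableEq R]
    (h : V → R) : 2 * #{e ∈ G.edgeFinset | (signedIncMatrix V R *ᵥ h) e ≠ 0} =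
      ∑ u, #{v ∈ G.neighborFinset u | h v ≠ h u} := by
  rw [← sum_card_filter_neighborFinset]
  refine sum_congr rfl fun u _ => congrArg card (filter_congr fun v _ => ?_)
  rw [signedIncMatrix_mulVec_ne_zero_iff, ne_comm]

lemma two_mul_card_filter_vecMul_incMatrix_ne_zero {R : Type*} [NonAssocSemiring R]
    [DecidableEq R] (h : V → R) : 2 * #{e ∈ G.edgeFinset | (h ᵥ* G.incMatrix R) e ≠ 0} =
      ∑ u, #{v ∈ G.neighborFinset u | h u + h v ≠ 0} := by
  rw [← sum_card_filter_neighborFinset]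
  refine sum_congr rfl fun u _ => congrArg card (filter_congr fun v hv => ?_)
  rw [vecMul_incMatrix_mk G ((G.mem_neighborFinset u v).1 hv)]

theorem totalWeightChoosable_one_succ {k : ℕ}
    (H : ∀ h : V → ℝ, ∑ u, #{v ∈ G.neighborFinset u | h v ≠ h u} ≤
      k * ∑ u, #{v ∈ G.neighborFinset u | h u + h v ≠ 0}) : TotalWeightChoosable G 1 (k + 1) := by
  intro Lv Le hLv hLe
  choose fv hfv using fun v => card_eq_one.1 (hLv v)
  have hrow : ∀ e ∈ G.edgeFinset, signedIncMatrix V ℝ e ≠ 0 := by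
    intro e he
    induction e with | _ u v
    exact signedIncMatrix_row_ne_zero (SimpleGraph.mem_edgeFinset.1 he : G.Adj u v).ne
  have hcount (h : V → ℝ) : #{e ∈ G.edgeFinset | (signedIncMatrix V ℝ *ᵥ h) e ≠ 0} ≤
      (k • G.edgeFinset.val).countP fun e => (h ᵥ* G.incMatrix ℝ) e ≠ 0 := by
    rw [Multiset.countP_nsmul, Multiset.countP_eq_card_filter, ← filter_val, card_val]
    refine le_of_mul_le_mul_left ?_ two_pos
    rw [mul_left_comm, two_mul_card_filter_signedIncMatrix_mulVec_ne_zero,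
      two_mul_card_filter_vecMul_incMatrix_ne_zero]
    exact H h
  have hsize (e : Sym2 V) : (k • G.edgeFinset.val).count e <
      #(if e ∈ G.edgeFinset then Le e else {0}) := by
    split_ifs with he
    · simp [hLe e he, Multiset.count_eq_one_of_mem (nodup _) he]
    · simp [Multiset.count_eq_zero_of_notMem he]
  obtain ⟨fe, hfe, hne⟩ := exists_forall_mulVec_mulVec_ne (signedIncMatrix V ℝ) (G.incMatrix ℝ)
    hrow hcount (-(signedIncMatrix V ℝ *ᵥ fv)) hsize
  refine ⟨fv, fe, fun v => by simp [hfv], fun e he => by simpa only [if_pos he] using hfe e, ?_⟩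
  intro i j hij
  have hsum : (signedIncMatrix V ℝ *ᵥ (fv + G.incMatrix ℝ *ᵥ fe)) s(i, j) ≠ 0 := by
    rw [mulVec_add, Pi.add_apply, add_comm, ← eq_neg_iff_add_eq_zero.ne]
    exact hne _ (SimpleGraph.mem_edgeFinset.2 hij)
  simpa only [Pi.add_apply, incMatrix_mulVec_apply] using
    (signedIncMatrix_mulVec_ne_zero_iff _ i j).1 hsum

end WeightChoosability

section Dense

open Finset

lemma sum_card_filter_eq_eq_sum_mul {V W α : Type*} [Fintype V] [Fintype W] [DecidableEq α]
    (f : V → α) (g : W → α) {S : Finset α} (hf : ∀ u, f u ∈ S) :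
    ∑ u, #{w | g w = f u} = ∑ x ∈ S, #{u | f u = x} * #{w | g w = x} := by
  rw [← sum_fiberwise_of_maps_to' (fun u _ => hf u) fun x => #{w | g w = x}]
  simp only [sum_const, smul_eq_mul]

lemma two_mul_sum_card_filter_eq_le {V W α : Type*} [Fintype V] [Fintype W] [DecidableEq α]
    (f : V → α) (g : W → α) :
    2 * ∑ u, #{w | g w = f u} ≤ ∑ u, #{u' | f u' = f u} + ∑ w, #{w' | g w' = g w} := by
  have hf (u : V) : f u ∈ univ.image f ∪ univ.image g := by simp
  have hg (w : W) : g w ∈ univ.image f ∪ univ.image g := by simp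
  rw [sum_card_filter_eq_eq_sum_mul f g hf, sum_card_filter_eq_eq_sum_mul f f hf,
    sum_card_filter_eq_eq_sum_mul g g hg, mul_sum, ← sum_add_distrib]
  refine sum_le_sum fun x _ => ?_
  rw [← mul_assoc, ← sq, ← sq]
  exact two_mul_le_add_sq _ _

lemma sum_card_filter_eq_neg_le {V K : Type*} [Fintype V] [AddGroup K] [DecidableEq K]
    (h : V → K) : ∑ u, #{v | h v = -h u} ≤ ∑ u, #{v | h v = h u} := by
  have hle := two_mul_sum_card_filter_eq_le (fun u => -h u) h
  simp only [neg_inj] at hle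
  omega

lemma card_filter_ne_add_le_of_dense {V K : Type*} [Fintype V] [AddCommGroup K] [LinearOrder K]
    [IsOrderedAddMonoid K] (G : SimpleGraph V) [DecidableRel G.Adj] {u : V}
    (hu : 3 * Fintype.card V ≤ 4 * G.degree u) (h : V → K) :
    2 * #{v ∈ G.neighborFinset u | h v ≠ h u} + 3 * #{v | h v = h u} ≤
      4 * #{v ∈ G.neighborFinset u | h u + h v ≠ 0} + 3 * #{v | h v = -h u} := by
  by_cases h0 : h u = 0
  · simp only [h0, neg_zero, zero_add]
    omega
  have hne : #{v ∈ G.neighborFinset u | h v ≠ h u} + #{v | h v = h u} ≤ Fintype.card V := by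
    rw [add_comm, ← card_univ, ← card_filter_add_card_filter_not (s := univ) fun v => h v = h u]
    gcongr
    exact subset_univ _
  have hdisj : #{v | h v = h u} + #{v | h v = -h u} ≤ Fintype.card V := by
    classical
    rw [← card_union_of_disjoint]
    · exact card_le_univ _
    · exact disjoint_filter.2 fun v _ hv hv' => h0 (self_eq_neg.1 (hv.symm.trans hv'))
  have hdeg : G.degree u ≤ #{v ∈ G.neighborFinset u | h u + h v ≠ 0} + #{v | h v = -h u} := by
    rw [← G.card_neighborFinset_eq_degree, add_comm,
      ← card_filter_add_card_filter_not (s := G.neighborFinset u) fun v => h u + h v = 0]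
    gcongr
    exact fun v hv => mem_filter.2
      ⟨mem_univ v, (neg_eq_of_add_eq_zero_right (mem_filter.1 hv).2).symm⟩
  omega

theorem dense_eulerian_stmt1_general {V : Type*} [Fintype V] [DecidableEq V] (G : SimpleGraph V)
    [DecidableRel G.Adj] (hdeg : ∀ v, 3 * Fintype.card V ≤ 4 * G.degree v) :
    TotalWeightChoosable G 1 3 := by
  refine totalWeightChoosable_one_succ G fun h => ?_
  have hsum := sum_le_sum fun u (_ : u ∈ univ) => card_filter_ne_add_le_of_dense G (hdeg u) h
  have hneg := sum_card_filter_eq_neg_le h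
  simp only [sum_add_distrib, ← mul_sum] at hsum
  omega

end Dense

/-- Every sufficiently large Eulerian graph (connected, all degrees even) with minimum
degree at least `0.91 n` is total weight `(1,3)`-choosable. -/
theorem dense_eulerian_stmt1 :
    ∃ n₀ : ℕ, ∀ (V : Type) [Fintype V] [DecidableEq V] (G : SimpleGraph V)
      [DecidableRel G.Adj],
      n₀ ≤ Fintype.card V →
      G.Connected → (∀ v : V, Even (G.degree v)) →
      (∀ v : V, (0.91 : ℝ) * (Fintype.card V : ℝ) ≤ (G.degree v : ℝ)) →
      TotalWeightChoosable G 1 3 := by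
  refine ⟨0, fun V _ _ G _ _ _ _ hdeg => dense_eulerian_stmt1_general G fun v => ?_⟩
  have hv : (3 * Fintype.card V : ℝ) ≤ 4 * G.degree v := by
    linarith [hdeg v, (Fintype.card V).cast_nonneg (α := ℝ)]
  exact_mod_cast hv
end

section
/- Let G=(V,E) be a finite simple graph with V = {1,…,n} and let K : E → ℕ. Then K is sufficient for G (i.e., there exists K' : E → ℕ with K' ≤ K pointwise such that the coefficient of x^{K'} in P_G is nonzero) if and only if there exists a polynomial F in the vector space W_E^K with ⟨F, f_{A_G}⟩ ≠ 0. -/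
open scoped BigOperators

/-- The polynomial `P_G = ∏_{{i,j} ∈ E, i<j} (Σ_{e ∈ E(i)} x_e − Σ_{e ∈ E(j)} x_e)` in the
variables `{x_e : e ∈ E}`, where `E(v)` is the set of edges incident to `v`.  The endpoints
of an edge `e = {i,j}` with `i < j` are `Sym2.inf e = i` and `Sym2.sup e = j`. -/
noncomputable def PG {n : ℕ} (G : SimpleGraph (Fin n)) [DecidableRel G.Adj] :
    MvPolynomial (↥G.edgeFinset) ℂ :=
  ∏ e : ↥G.edgeFinset,
    ((∑ e' : ↥G.edgeFinset, if Sym2.inf e.val ∈ e'.val then MvPolynomial.X e' else 0)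
      - (∑ e' : ↥G.edgeFinset, if Sym2.sup e.val ∈ e'.val then MvPolynomial.X e' else 0))

/-- `K : E → ℕ` is sufficient for `G` if for some `K' ≤ K` the coefficient of `x^{K'}`
in `P_G` is nonzero. -/
noncomputable def SufficientFor {n : ℕ} (G : SimpleGraph (Fin n)) [DecidableRel G.Adj]
    (K : ↥G.edgeFinset → ℕ) : Prop :=
  ∃ K' : ↥G.edgeFinset → ℕ, K' ≤ K ∧
    MvPolynomial.coeff (Finsupp.equivFunOnFinite.symm K') (PG G) ≠ 0

/-- The polynomial `f_{A_G} = ∏_{{i,j} ∈ E, i<j} (x_i − x_j)` in the vertex variables. -/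
noncomputable def fAG {n : ℕ} (G : SimpleGraph (Fin n)) [DecidableRel G.Adj] :
    MvPolynomial (Fin n) ℂ :=
  ∏ e : ↥G.edgeFinset,
    (MvPolynomial.X (Sym2.inf e.val) - MvPolynomial.X (Sym2.sup e.val))

/-- `W_E^K`: the complex vector space spanned by the polynomials
`∏_{{i,j} ∈ E, i<j} (x_i + x_j)^{K'(e)}` over all `K' ≤ K`. -/
noncomputable def WEK {n : ℕ} (G : SimpleGraph (Fin n)) [DecidableRel G.Adj]
    (K : ↥G.edgeFinset → ℕ) : Submodule ℂ (MvPolynomial (Fin n) ℂ) :=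
  Submodule.span ℂ
    {p | ∃ K' : ↥G.edgeFinset → ℕ, K' ≤ K ∧
      p = ∏ e : ↥G.edgeFinset,
        (MvPolynomial.X (Sym2.inf e.val) + MvPolynomial.X (Sym2.sup e.val)) ^ K' e}

/-- The inner product `⟨f,g⟩ = Σ_{K : sum K = n} K! ⋅ coe(x^K, f) ⋅ conj(coe(x^K, g))` on
(homogeneous degree-`n`) polynomials; the sum runs over all `K : ι → ℕ` with `Σ_j K j = n`
(all such `K` satisfy `K j ≤ n` for every `j`). -/
noncomputable def polyInner {ι : Type*} [Fintype ι] [DecidableEq ι] (n : ℕ)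
    (f g : MvPolynomial ι ℂ) : ℂ :=
  ∑ K ∈ (Fintype.piFinset fun _ : ι => Finset.range (n + 1)).filter
      (fun K => ∑ j, K j = n),
    (∏ j, ((K j).factorial : ℂ))
      * MvPolynomial.coeff (Finsupp.equivFunOnFinite.symm K) f
      * (starRingEnd ℂ) (MvPolynomial.coeff (Finsupp.equivFunOnFinite.symm K) g)

/-!
The inner product is, up to conjugation, the apolar pairing `∑ L, L! * f_L * g_L`, for which
multiplication by `x_i` is adjoint to `∂/∂x_i`. By the chain rule, the linear substitutions given by
a matrix and by its transpose are then adjoint to each other. For the incidence matrix of `G`, one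
of them sends `y^K'` to `∏ (x_i + x_j)^{K' e}` and the other sends `f_{A_G}` to `P_G`, so that
`⟨∏ (x_i + x_j)^{K' e}, f_{A_G}⟩` is `K'!` times the coefficient of `y^K'` in `P_G`. Conjugation has
no effect because `f_{A_G}` has integer coefficients, and neither has the restriction to monomials
of degree `|E|`, because `f_{A_G}` is homogeneous of that degree.
-/

open MvPolynomial
open scoped Matrix Nat

section Span

variable {R M N : Type*} [Semiring R] [AddCommMonoid M] [AddCommMonoid N] [Module R M] [Module R N]

lemma exists_mem_span_apply_ne_zero_iff (f : M →ₗ[R] N) (s : Set M) :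
    (∃ x ∈ Submodule.span R s, f x ≠ 0) ↔ ∃ x ∈ s, f x ≠ 0 := by
  rw [← not_iff_not]
  push Not
  exact Submodule.span_le (p := LinearMap.ker f)

end Span

section MultiFactorial

variable {σ : Type*}

/-- The multi-index factorial `L! = ∏ i, (L i)!` of an exponent vector; the factors outside the
support of `L` are `0! = 1`. -/
def multiFactorial (L : σ →₀ ℕ) : ℕ :=
  L.prod fun _ k => k !

lemma multiFactorial_zero : multiFactorial (0 : σ →₀ ℕ) = 1 :=
  Finsupp.prod_zero_index

lemma multiFactorial_ne_zero (L : σ →₀ ℕ) : multiFactorial L ≠ 0 :=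
  Finset.prod_ne_zero_iff.2 fun _ _ => Nat.factorial_ne_zero _

lemma multiFactorial_eq_prod [Fintype σ] (L : σ →₀ ℕ) : multiFactorial L = ∏ i, (L i)! :=
  Finsupp.prod_fintype _ _ fun _ => Nat.factorial_zero

lemma multiFactorial_add_single (L : σ →₀ ℕ) (i : σ) :
    multiFactorial (L + Finsupp.single i 1) = (L i + 1) * multiFactorial L := by
  have split (L' : σ →₀ ℕ) : multiFactorial L' = (L' i)! * multiFactorial (L'.erase i) :=
    (Finsupp.mul_prod_erase' L' i _ fun _ => Nat.factorial_zero).symm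
  rw [split, split L, Finsupp.erase_add, Finsupp.erase_single, add_zero, Finsupp.add_apply,
    Finsupp.single_eq_same, Nat.factorial_succ, mul_assoc]

end MultiFactorial

section Substitution

variable {R σ τ : Type*} [CommSemiring R]

lemma constantCoeff_bind₁ {f : σ → MvPolynomial τ R} (hf : ∀ i, constantCoeff (f i) = 0)
    (p : MvPolynomial σ R) : constantCoeff (bind₁ f p) = constantCoeff p := by
  induction p using MvPolynomial.induction_on with
  | C a => simp
  | add p q hp hq => simp only [map_add, hp, hq]
  | mul_X p i _ => simp [hf]

lemma pderiv_bind₁ [Fintype σ] (f : σ → MvPolynomial τ R) (p : MvPolynomial σ R) (j : τ) :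
    pderiv j (bind₁ f p) = ∑ i, bind₁ f (pderiv i p) * pderiv j (f i) := by
  classical
  induction p using MvPolynomial.induction_on with
  | C a => simp
  | add p q hp hq => simp only [map_add, hp, hq, add_mul, Finset.sum_add_distrib]
  | mul_X p k hp =>
    have hX (i : σ) : bind₁ f (pderiv i (X k)) = if k = i then 1 else 0 := by
      rw [pderiv_X, Pi.single_apply]
      split_ifs <;> simp
    simp only [map_mul, pderiv_mul, map_add, bind₁_X_right, hp, hX, add_mul,
      Finset.sum_add_distrib, Finset.sum_mul, mul_ite, ite_mul, mul_one, mul_zero, zero_mul,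
      Finset.sum_ite_eq, Finset.mem_univ, if_true, mul_right_comm]

lemma toMvPolynomial_eq_sum_smul_X [Fintype τ] (A : Matrix σ τ R) (i : σ) :
    A.toMvPolynomial i = ∑ j, A i j • X j := by
  simp only [Matrix.toMvPolynomial, smul_eq_C_mul, C_mul_X_eq_monomial]

lemma pderiv_toMvPolynomial [Fintype τ] (A : Matrix σ τ R) (i : σ) (j : τ) :
    pderiv j (A.toMvPolynomial i) = C (A i j) := by
  classical
  simp [toMvPolynomial_eq_sum_smul_X, pderiv_X, Pi.single_apply, smul_eq_C_mul]

end Substitution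

section ApolarPairing

variable {R σ τ : Type*} [CommSemiring R]

/-- The apolar pairing `(f, g) ↦ ∑ L, L! * coeff L f * coeff L g`, of which `polyInner` is the
sesquilinear version. It is defined by its values on the monomials `f`, so that neither a bound on
the degree nor finiteness of the set of variables is needed. -/
noncomputable def apolarPairing : MvPolynomial σ R →ₗ[R] MvPolynomial σ R →ₗ[R] R :=
  (basisMonomials σ R).constr R fun L => (multiFactorial L : R) • lcoeff R L

lemma apolarPairing_monomial (L : σ →₀ ℕ) (a : R) (g : MvPolynomial σ R) :
    apolarPairing (monomial L a) g = a * (multiFactorial L * coeff L g) := by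
  have h : monomial L a = a • basisMonomials σ R L := by
    rw [coe_basisMonomials, smul_monomial, smul_eq_mul, mul_one]
  rw [h, map_smul, apolarPairing, Module.Basis.constr_basis]
  rfl

lemma apolarPairing_eq_sum {g : MvPolynomial σ R} {s : Finset (σ →₀ ℕ)} (hs : g.support ⊆ s)
    (f : MvPolynomial σ R) :
    apolarPairing f g = ∑ L ∈ s, multiFactorial L * coeff L f * coeff L g := by
  classical
  induction f using MvPolynomial.induction_on' with
  | monomial M a =>
    simp only [apolarPairing_monomial, coeff_monomial, mul_ite, ite_mul, mul_zero, zero_mul,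
      Finset.sum_ite_eq]
    split_ifs with hM
    · ring
    · rw [notMem_support_iff.1 fun h => hM (hs h), mul_zero, mul_zero]
  | add p q hp hq =>
    simp only [map_add, LinearMap.add_apply, hp, hq, coeff_add, mul_add, add_mul,
      Finset.sum_add_distrib]

lemma apolarPairing_mul_X (f g : MvPolynomial σ R) (i : σ) :
    apolarPairing (f * X i) g = apolarPairing f (pderiv i g) := by
  induction f using MvPolynomial.induction_on' with
  | monomial L a =>
    have hX : monomial L a * X i = monomial (L + Finsupp.single i 1) a := by
      rw [monomial_add_single, pow_one]
    rw [hX, apolarPairing_monomial, apolarPairing_monomial, multiFactorial_add_single, coeff_pderiv]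
    push_cast
    ring
  | add p q hp hq => simp only [add_mul, map_add, LinearMap.add_apply, hp, hq]

lemma apolarPairing_mul_toMvPolynomial [Fintype σ] (A : Matrix τ σ R) (f g : MvPolynomial σ R)
    (j : τ) :
    apolarPairing (f * A.toMvPolynomial j) g = apolarPairing f (∑ i, A j i • pderiv i g) := by
  simp only [toMvPolynomial_eq_sum_smul_X, Finset.mul_sum, mul_smul_comm, map_sum, map_smul,
    LinearMap.sum_apply, LinearMap.smul_apply, apolarPairing_mul_X]

lemma apolarPairing_bind₁_toMvPolynomial [Fintype σ] [Fintype τ] (A : Matrix τ σ R)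
    (p : MvPolynomial τ R) (g : MvPolynomial σ R) :
    apolarPairing (bind₁ A.toMvPolynomial p) g = apolarPairing p (bind₁ Aᵀ.toMvPolynomial g) := by
  induction p using MvPolynomial.induction_on generalizing g with
  | C a =>
    have h0 : coeff 0 (bind₁ Aᵀ.toMvPolynomial g) = coeff 0 g :=
      constantCoeff_bind₁ Aᵀ.toMvPolynomial_constantCoeff g
    rw [bind₁_C_right, C_apply, C_apply, apolarPairing_monomial, apolarPairing_monomial, h0,
      multiFactorial_zero, multiFactorial_zero]
  | add p q hp hq => simp only [map_add, LinearMap.add_apply, hp, hq]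
  | mul_X p j hp =>
    have chain : pderiv j (bind₁ Aᵀ.toMvPolynomial g)
        = bind₁ Aᵀ.toMvPolynomial (∑ i, A j i • pderiv i g) := by
      simp only [pderiv_bind₁, pderiv_toMvPolynomial, Matrix.transpose_apply, map_sum, map_smul,
        mul_comm _ (C _), ← smul_eq_C_mul]
    rw [map_mul, bind₁_X_right, apolarPairing_mul_toMvPolynomial, hp, apolarPairing_mul_X, chain]

lemma apolarPairing_prod_toMvPolynomial_pow [Fintype σ] [Fintype τ] (A : Matrix τ σ R)
    (L : τ →₀ ℕ) (g : MvPolynomial σ R) :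
    apolarPairing (∏ j, A.toMvPolynomial j ^ L j) g
      = multiFactorial L * coeff L (bind₁ Aᵀ.toMvPolynomial g) := by
  have h : ∏ j, A.toMvPolynomial j ^ L j = bind₁ A.toMvPolynomial (monomial L 1) := by
    rw [bind₁_monomial, map_one, one_mul, Finset.prod_subset L.support.subset_univ]
    intro j _ hj
    rw [Finsupp.notMem_support_iff.1 hj, pow_zero]
  rw [h, apolarPairing_bind₁_toMvPolynomial, apolarPairing_monomial, one_mul]

end ApolarPairing

lemma polyInner_eq_apolarPairing {ι : Type*} [Fintype ι] [DecidableEq ι] {m : ℕ}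
    {g : MvPolynomial ι ℂ} (hg : g.IsHomogeneous m) (f : MvPolynomial ι ℂ) :
    polyInner m f g = apolarPairing f (map (starRingEnd ℂ) g) := by
  have hs : (map (starRingEnd ℂ) g).support ⊆
      ((Fintype.piFinset fun _ : ι => Finset.range (m + 1)).filter fun L => ∑ i, L i = m).map
        Finsupp.equivFunOnFinite.symm.toEmbedding := by
    intro L hL
    have hdeg : ∑ i, L i = m := by
      rw [← Finsupp.degree_eq_sum]
      by_contra hne
      exact mem_support_iff.1 (support_map_subset _ _ hL) (hg.coeff_eq_zero hne)
    have hle (i : ι) : L i ≤ m :=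
      hdeg ▸ Finset.single_le_sum_of_canonicallyOrdered (Finset.mem_univ i)
    exact Finset.mem_map.2 ⟨L, by simpa [Nat.lt_succ_iff, hdeg] using hle, by ext; simp⟩
  rw [apolarPairing_eq_sum hs, Finset.sum_map]
  simp [polyInner, multiFactorial_eq_prod, coeff_map]

section Incidence

variable (R : Type*) {V : Type*} (G : SimpleGraph V)

/-- The vertex-edge incidence matrix of `G`, with columns indexed by the edges of `G` only; those of
`SimpleGraph.incMatrix` are indexed by all of `Sym2 V`. -/
def edgeIncMatrix [Zero R] [One R] [DecidableEq V] [DecidableRel G.Adj] [Fintype G.edgeSet] :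
    Matrix V G.edgeFinset R :=
  (G.incMatrix R).submatrix id Subtype.val

lemma edgeIncMatrix_apply [Zero R] [One R] [DecidableEq V] [DecidableRel G.Adj]
    [Fintype G.edgeSet] (v : V) (e : G.edgeFinset) :
    edgeIncMatrix R G v e = if v ∈ e.val then 1 else 0 := by
  have he : e.val ∈ G.edgeSet := SimpleGraph.mem_edgeFinset.1 e.2
  simp [edgeIncMatrix, SimpleGraph.incMatrix_apply', SimpleGraph.incidenceSet, he]

lemma toMvPolynomial_edgeIncMatrix [CommSemiring R] [DecidableEq V] [DecidableRel G.Adj]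
    [Fintype G.edgeSet] (v : V) :
    (edgeIncMatrix R G).toMvPolynomial v = ∑ e : G.edgeFinset, if v ∈ e.val then X e else 0 := by
  simp only [toMvPolynomial_eq_sum_smul_X, edgeIncMatrix_apply, ite_smul, one_smul, zero_smul]

lemma toMvPolynomial_transpose_edgeIncMatrix [CommSemiring R] [LinearOrder V] [Fintype V]
    [DecidableRel G.Adj] (e : G.edgeFinset) :
    (edgeIncMatrix R G)ᵀ.toMvPolynomial e = X e.val.inf + X e.val.sup := by
  induction e using Subtype.rec with | mk e he
  induction e with | h a b
  have hab : a ≠ b := (SimpleGraph.mem_edgeFinset.1 he).ne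
  calc
    (edgeIncMatrix R G)ᵀ.toMvPolynomial ⟨s(a, b), he⟩ = ∑ v, if v ∈ s(a, b) then X v else 0 := by
      simp only [toMvPolynomial_eq_sum_smul_X, Matrix.transpose_apply, edgeIncMatrix_apply,
        ite_smul, one_smul, zero_smul]
    _ = X a + X b := by
      have hends : Finset.univ.filter (· ∈ s(a, b)) = {a, b} := by ext; simp
      rw [← Finset.sum_filter, hends, Finset.sum_pair hab]
    _ = X s(a, b).inf + X s(a, b).sup := by
      rcases le_total a b with h | h
      · simp [h]
      · simp [h, add_comm]

end Incidence

section GraphPolynomials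

variable {n : ℕ} (G : SimpleGraph (Fin n)) [DecidableRel G.Adj]

lemma fAG_isHomogeneous : (fAG G).IsHomogeneous G.edgeFinset.card := by
  have h := IsHomogeneous.prod Finset.univ
    (fun e : G.edgeFinset => (X e.val.inf - X e.val.sup : MvPolynomial (Fin n) ℂ)) (fun _ => 1)
    fun _ _ => (isHomogeneous_X ℂ _).sub (isHomogeneous_X ℂ _)
  simpa [fAG] using h

lemma map_fAG (f : ℂ →+* ℂ) : map f (fAG G) = fAG G := by
  simp [fAG]

lemma bind₁_edgeIncMatrix_fAG : bind₁ (edgeIncMatrix ℂ G).toMvPolynomial (fAG G) = PG G := by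
  simp only [fAG, PG, map_prod, map_sub, bind₁_X_right, toMvPolynomial_edgeIncMatrix]

lemma polyInner_fAG (F : MvPolynomial (Fin n) ℂ) :
    polyInner G.edgeFinset.card F (fAG G) = apolarPairing F (fAG G) := by
  rw [polyInner_eq_apolarPairing (fAG_isHomogeneous G), map_fAG]

lemma polyInner_prod_add_pow_fAG (K' : G.edgeFinset → ℕ) :
    polyInner G.edgeFinset.card (∏ e, (X e.val.inf + X e.val.sup) ^ K' e) (fAG G)
      = multiFactorial (Finsupp.equivFunOnFinite.symm K')
        * coeff (Finsupp.equivFunOnFinite.symm K') (PG G) := by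
  have h := apolarPairing_prod_toMvPolynomial_pow (edgeIncMatrix ℂ G)ᵀ
    (Finsupp.equivFunOnFinite.symm K') (fAG G)
  rw [Matrix.transpose_transpose, bind₁_edgeIncMatrix_fAG] at h
  simpa only [polyInner_fAG, toMvPolynomial_transpose_edgeIncMatrix,
    Finsupp.equivFunOnFinite_symm_apply_apply] using h

lemma exists_mem_WEK_polyInner_ne_zero_iff (K : G.edgeFinset → ℕ) :
    (∃ F ∈ WEK G K, polyInner G.edgeFinset.card F (fAG G) ≠ 0) ↔
      ∃ K' ≤ K,
        polyInner G.edgeFinset.card (∏ e, (X e.val.inf + X e.val.sup) ^ K' e) (fAG G) ≠ 0 := by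
  simp only [polyInner_fAG]
  refine (exists_mem_span_apply_ne_zero_iff (apolarPairing.flip (fAG G)) _).trans ⟨?_, ?_⟩
  · rintro ⟨_, ⟨K', hK', rfl⟩, hne⟩
    exact ⟨K', hK', hne⟩
  · rintro ⟨K', hK', hne⟩
    exact ⟨_, ⟨K', hK', rfl⟩, hne⟩

end GraphPolynomials

/-- `K` is sufficient for `G` iff `⟨F, f_{A_G}⟩ ≠ 0` for some `F ∈ W_E^K`, where the inner
product is taken on homogeneous polynomials of degree `|E|` in the vertex variables. -/
theorem sufficient_iff_inner_ne_zero {n : ℕ} (G : SimpleGraph (Fin n)) [DecidableRel G.Adj]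
    (K : ↥G.edgeFinset → ℕ) :
    SufficientFor G K ↔
      ∃ F ∈ WEK G K, polyInner G.edgeFinset.card F (fAG G) ≠ 0 := by
  rw [exists_mem_WEK_polyInner_ne_zero_iff]
  refine exists_congr fun K' => and_congr_right fun _ => ?_
  rw [polyInner_prod_add_pow_fAG, mul_ne_zero_iff]
  exact (and_iff_right (Nat.cast_ne_zero.2 (multiFactorial_ne_zero _))).symm
end

section
/- Let n ≥ 3 be odd and let K_n be the complete graph on vertex set {1,…,n}. Then K_n has a path covering family in which every path has length 2 and every edge of K_n is contained in exactly two of the paths; explicitly, assigning to each edge e = {i,j} with i < j the path (i, t_{i,j}, j), where t_{i,j} = i + (j−i)/2 if j−i is even and t_{i,j} = j + (n−(j−i))/2 (mod n) if j−i is odd, yields a path covering family 𝒫 of K_n with K_𝒫(e) = 2 for every edge e. -/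
/-!
Since `n` is odd, `2` is invertible modulo `n`, and `t_{i,j}` is the midpoint `(i + j) / 2` of `i`
and `j` in `ℤ/n`. An edge `{a, b}` lies on the path `x, (x + y) / 2, y` exactly when one of its ends
is the midpoint of `x` and `y` and the other is `x` or `y`, i.e. when `{x, y}` is `{a, 2b - a}` or
`{b, 2a - b}`. These are two different edges when `a ≠ b`.
-/

open scoped BigOperators

/-- The middle vertex `t_{i,j}` of the path assigned to the edge `{i,j}` (`i < j`) of the
complete graph on `n` vertices (labels taken modulo `n`):
`t_{i,j} = i + (j−i)/2` if `j − i` is even, and `t_{i,j} = j + (n−(j−i))/2 (mod n)`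
if `j − i` is odd. -/
def tMid (n i j : ℕ) : ℕ :=
  if (j - i) % 2 = 0 then i + (j - i) / 2 else (j + (n - (j - i)) / 2) % n

/-- `t_{i,j}` as a vertex of the complete graph on `n` vertices (labels modulo `n`). -/
def tMidFin (n : ℕ) (hn : 0 < n) (i j : ℕ) : Fin n :=
  ⟨tMid n i j % n, Nat.mod_lt _ hn⟩

section Sym2Order

variable {α : Type*} [LinearOrder α]

theorem sym2_mk_inf_sup (e : Sym2 α) : s(e.inf, e.sup) = e :=
  Sym2.sortEquiv.symm_apply_apply e

theorem sym2_inf_eq_sup_iff {e : Sym2 α} : e.inf = e.sup ↔ e.IsDiag := by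
  rw [← Sym2.mk_isDiag_iff, sym2_mk_inf_sup]

end Sym2Order

section Midpoint

open Equiv (pointReflection)

section Reflection

variable {V P : Type*}

theorem ne_pointReflection_left [AddGroup V] [AddTorsor V P] {a b : P} (h : a ≠ b) :
    a ≠ pointReflection a b := fun hab =>
  h <| (pointReflection a).injective <| by rwa [Equiv.pointReflection_self]

variable [AddCommGroup V] [AddTorsor V P]

theorem ne_pointReflection_right (h2 : Function.Injective (2 • · : V → V)) {a b : P} (h : a ≠ b) :
    a ≠ pointReflection b a := fun hab =>
  h <| (Equiv.pointReflection_fixed_iff_of_injective_two_nsmul h2).1 hab.symm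

theorem card_edges_eq_mk_pointReflection [Fintype P] [DecidableEq P]
    (h2 : Function.Injective (2 • · : V → V)) {a b : P} (h : a ≠ b) :
    {e ∈ (⊤ : SimpleGraph P).edgeFinset |
      e = s(a, pointReflection b a) ∨ e = s(b, pointReflection a b)}.card = 2 := by
  have edges_ne : s(a, pointReflection b a) ≠ s(b, pointReflection a b) := by
    simp [h, ne_pointReflection_left h]
  have mem_edgeFinset {p q : P} (hpq : p ≠ q) :
      s(p, pointReflection q p) ∈ (⊤ : SimpleGraph P).edgeFinset := by
    simpa using ne_pointReflection_right h2 hpq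
  rw [← Finset.card_pair edges_ne]
  congr 1
  ext e
  simp only [Finset.mem_filter, Finset.mem_insert, Finset.mem_singleton, and_iff_right_iff_imp]
  rintro (rfl | rfl)
  exacts [mem_edgeFinset h, mem_edgeFinset h.symm]

end Reflection

theorem injective_two_nsmul_of_module (R : Type*) {V : Type*} [Ring R] [Invertible (2 : R)]
    [AddCommGroup V] [Module R V] : Function.Injective (2 • · : V → V) := fun x y h =>
  (isUnit_of_invertible (2 : R)).smul_left_cancel.1 <| by simpa [two_smul] using h

variable (R : Type*) {V P : Type*} [Ring R] [Invertible (2 : R)] [AddCommGroup V] [Module R V]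
  [AddTorsor V P]

/-- The path `x, midpoint R x y, y` in the complete graph on the points of an affine space. -/
def midpointPath {x y : P} (h : x ≠ y) : (⊤ : SimpleGraph P).Walk x y :=
  .cons (v := midpoint R x y) (by simpa using h) (.cons (by simpa using h) .nil)

theorem midpointPath_isPath {x y : P} (h : x ≠ y) : (midpointPath R h).IsPath := by
  simp [midpointPath, h]

theorem mem_edges_midpointPath_iff {a b x y : P} (h : x ≠ y) :
    s(a, b) ∈ (midpointPath R h).edges ↔
      s(x, y) = s(a, pointReflection b a) ∨ s(x, y) = s(b, pointReflection a b) := by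
  have left_iff (p q : P) : p = x ∧ q = midpoint R x y ↔ x = p ∧ y = pointReflection q p := by
    grind [midpoint_eq_iff']
  have right_iff (p q : P) : p = y ∧ q = midpoint R x y ↔ x = pointReflection q p ∧ y = p := by
    grind [midpoint_eq_iff', midpoint_comm]
  simp only [midpointPath, SimpleGraph.Walk.edges_cons, SimpleGraph.Walk.edges_nil,
    List.mem_cons, List.not_mem_nil, or_false, Sym2.eq_iff]
  grind

theorem completeGraph_pathCoveringFamily_general [Fintype P] [LinearOrder P] :
    ∃ p : ∀ e ∈ (⊤ : SimpleGraph P).edgeFinset, (⊤ : SimpleGraph P).Walk e.inf e.sup,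
      (∀ e he, (p e he).IsPath ∧ (p e he).length = 2 ∧
        (p e he).support = [e.inf, midpoint R e.inf e.sup, e.sup]) ∧
      ∀ e' ∈ (⊤ : SimpleGraph P).edgeFinset,
        (∑ e ∈ (⊤ : SimpleGraph P).edgeFinset.attach,
          if e' ∈ (p e.1 e.2).edges then 1 else 0) = 2 := by
  have inf_ne_sup {e : Sym2 P} (he : e ∈ (⊤ : SimpleGraph P).edgeFinset) : e.inf ≠ e.sup := by
    simpa [sym2_inf_eq_sup_iff] using he
  refine ⟨fun e he => midpointPath R (inf_ne_sup he),
    fun e he => ⟨midpointPath_isPath R _, rfl, rfl⟩, Sym2.ind fun a b hab => ?_⟩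
  simp only [mem_edges_midpointPath_iff, sym2_mk_inf_sup]
  rw [Finset.sum_attach _ fun e => if e = s(a, pointReflection b a) ∨
    e = s(b, pointReflection a b) then 1 else 0, Finset.sum_boole]
  exact card_edges_eq_mk_pointReflection (injective_two_nsmul_of_module R) (by simpa using hab)

end Midpoint

section MidpointModOdd

theorem two_mul_tMid_modEq {n i j : ℕ} (hn : Odd n) (hij : i ≤ j) (hji : j ≤ i + n) :
    2 * tMid n i j ≡ i + j [MOD n] := by
  unfold tMid
  split_ifs with h
  · exact congrArg (· % n) (by omega)
  · calc
      2 * ((j + (n - (j - i)) / 2) % n) ≡ 2 * (j + (n - (j - i)) / 2) [MOD n] :=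
        (Nat.mod_modEq _ _).mul_left 2
      _ = i + j + n := by grind
      _ ≡ i + j [MOD n] := Nat.add_modEq_right

theorem tMidFin_add_self {n : ℕ} (hn0 : 0 < n) (hn : Odd n) {i j : Fin n} (hij : i ≤ j) :
    tMidFin n hn0 i j + tMidFin n hn0 i j = i + j := by
  have h : 2 * tMid n i j ≡ i + j [MOD n] := two_mul_tMid_modEq hn hij (by omega)
  simpa [Fin.ext_iff, Fin.val_add, tMidFin, ← two_mul, Nat.ModEq] using h

open Fin.CommRing

/-- The inverse of `2` modulo an odd number, through which `midpoint` makes sense in `Fin n`. -/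
abbrev invertibleTwoOfOdd {n : ℕ} [NeZero n] (hn : Odd n) : Invertible (2 : Fin n) :=
  (invertibleOfCoprime (p := n) (Nat.coprime_two_left.2 hn)).copy 2 Nat.cast_two.symm

theorem tMidFin_eq_midpoint {n : ℕ} [NeZero n] [Invertible (2 : Fin n)] (hn : Odd n) {i j : Fin n}
    (hij : i ≤ j) : tMidFin n (NeZero.pos n) i j = midpoint (Fin n) i j := by
  rw [eq_comm, midpoint_eq_iff', Equiv.pointReflection_apply, vsub_eq_sub, vadd_eq_add,
    sub_add_eq_add_sub, tMidFin_add_self (NeZero.pos n) hn hij, add_sub_cancel_left]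

end MidpointModOdd

/-- For odd `n ≥ 3`, assigning to each edge `e = {i,j}` (with `i = Sym2.inf e < j = Sym2.sup e`)
of the complete graph `K_n` the length-two path `(i, t_{i,j}, j)` yields a path covering
family in which every path has length `2` and every edge lies on exactly two of the
paths. -/
theorem completeGraph_pathCoveringFamily (n : ℕ) (hn : 3 ≤ n) (hodd : Odd n) :
    ∃ P : ∀ e ∈ (⊤ : SimpleGraph (Fin n)).edgeFinset,
        (⊤ : SimpleGraph (Fin n)).Walk (Sym2.inf e) (Sym2.sup e),
      (∀ e he, (P e he).IsPath ∧ (P e he).length = 2 ∧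
        (P e he).support
          = [Sym2.inf e, tMidFin n (by omega) (Sym2.inf e).val (Sym2.sup e).val,
              Sym2.sup e]) ∧
      (∀ e' ∈ (⊤ : SimpleGraph (Fin n)).edgeFinset,
        (∑ e ∈ (⊤ : SimpleGraph (Fin n)).edgeFinset.attach,
          if e' ∈ (P e.1 e.2).edges then 1 else 0) = 2) := by
  have : NeZero n := ⟨by omega⟩
  let := Fin.instCommRing n
  let := invertibleTwoOfOdd hodd
  obtain ⟨P, path, covered⟩ := completeGraph_pathCoveringFamily_general (Fin n) (P := Fin n)
  refine ⟨P, fun e he => ?_, covered⟩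
  rw [tMidFin_eq_midpoint hodd e.inf_le_sup]
  exact path e he
end

section
/- Let G=(V,E) be a finite simple graph with V = {1,…,n} and suppose there exists K : V ∪ E → ℕ with Σ_{z ∈ V ∪ E} K(z) = |E|, K(v) ≤ k−1 for every vertex v, and K(e) ≤ k'−1 for every edge e, such that the coefficient of the monomial ∏_{z ∈ V ∪ E} x_z^{K(z)} in P̃_G is nonzero. Then G is total weight (k,k')-choosable. -/
/-!
The polynomial `P̃_G` is a product of `|E|` linear forms, hence homogeneous of degree `|E|`, so
every monomial occurring in it has maximal degree. If the exponent of each variable in such a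
monomial is smaller than the size of the corresponding list, Alon's Combinatorial Nullstellensatz
gives weights from the lists at which `P̃_G` does not vanish. The factors of its value there are the
differences of the total weights of the ends of the edges, so these weights are proper. The lists
are real and `P̃_G` has complex coefficients, but it is the image of the same polynomial over `ℝ`.
-/

open scoped BigOperators

/-- The polynomial
`P̃_G = ∏_{{i,j} ∈ E, i<j} ((x_i + Σ_{e ∈ E(i)} x_e) − (x_j + Σ_{e ∈ E(j)} x_e))`
in the variables `{x_z : z ∈ V ∪ E}` (vertex variables on the left of the sum type, edge
variables on the right).  The endpoints of an edge `e = {i,j}` with `i < j` are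
`Sym2.inf e = i` and `Sym2.sup e = j`. -/
noncomputable def PtG {n : ℕ} (G : SimpleGraph (Fin n)) [DecidableRel G.Adj] :
    MvPolynomial (Fin n ⊕ ↥G.edgeFinset) ℂ :=
  ∏ e : ↥G.edgeFinset,
    ((MvPolynomial.X (Sum.inl (Sym2.inf e.val))
        + ∑ e' : ↥G.edgeFinset,
            if Sym2.inf e.val ∈ e'.val then MvPolynomial.X (Sum.inr e') else 0)
      - (MvPolynomial.X (Sum.inl (Sym2.sup e.val))
        + ∑ e' : ↥G.edgeFinset,
            if Sym2.sup e.val ∈ e'.val then MvPolynomial.X (Sum.inr e') else 0))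

theorem exists_mem_eval_ne_zero_of_isHomogeneous {σ R : Type*} [Finite σ] [CommRing R] [IsDomain R]
    {p : MvPolynomial σ R} {d : ℕ} (hp : p.IsHomogeneous d) {t : σ →₀ ℕ}
    (ht : MvPolynomial.coeff t p ≠ 0) (S : σ → Finset R) (htS : ∀ z, t z < (S z).card) :
    ∃ x : σ → R, (∀ z, x z ∈ S z) ∧ MvPolynomial.eval x p ≠ 0 := by
  have hp_ne : p ≠ 0 := MvPolynomial.ne_zero_iff.mpr ⟨t, ht⟩
  have hdeg : p.totalDegree = t.degree := by
    rw [hp.totalDegree hp_ne, ← not_ne_iff]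
    exact fun h => ht (hp.coeff_eq_zero h.symm)
  exact MvPolynomial.combinatorial_nullstellensatz_exists_eval_nonzero p t ht hdeg S htS

section TotalWeight

variable {V R : Type*} [DecidableEq V] (G : SimpleGraph V)

/-- The total weight of the vertex `v`: its own weight plus the weights of the edges at `v`. As in
`ProperTotalWeighting`, edge weights are given on all of `Sym2 V`. -/
def totalWeight [AddCommMonoid R] [G.LocallyFinite] (fv : V → R) (fe : Sym2 V → R) (v : V) : R :=
  fv v + ∑ e ∈ G.incidenceFinset v, fe e

variable [Fintype G.edgeSet]

variable (R) in
/-- The linear form `x_v + Σ_{e ∈ E(v)} x_e` whose value at a weighting is the total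
weight of `v`; as in `PtG`, vertex variables are on the left and edge variables on the right. -/
noncomputable def totalWeightForm [CommSemiring R] (v : V) :
    MvPolynomial (V ⊕ ↥G.edgeFinset) R :=
  MvPolynomial.X (Sum.inl v)
    + ∑ e : ↥G.edgeFinset, if v ∈ e.val then MvPolynomial.X (Sum.inr e) else 0

theorem isHomogeneous_totalWeightForm [CommSemiring R] (v : V) :
    (totalWeightForm R G v).IsHomogeneous 1 := by
  refine (MvPolynomial.isHomogeneous_X R _).add (.sum _ _ _ fun e _ => ?_)
  split_ifs
  · exact MvPolynomial.isHomogeneous_X R _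
  · exact MvPolynomial.isHomogeneous_zero _ R 1

theorem map_totalWeightForm {S : Type*} [CommSemiring R] [CommSemiring S] (f : R →+* S) (v : V) :
    MvPolynomial.map f (totalWeightForm R G v) = totalWeightForm S G v := by
  simp [totalWeightForm, apply_ite (MvPolynomial.map f)]

theorem eval_totalWeightForm [CommSemiring R] [G.LocallyFinite] (fv : V → R) (fe : Sym2 V → R)
    (v : V) :
    MvPolynomial.eval (Sum.elim fv fun e : ↥G.edgeFinset => fe e) (totalWeightForm R G v)
      = totalWeight G fv fe v := by
  have hedges : ∑ e : ↥G.edgeFinset, (if v ∈ e.val then fe e else 0)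
      = ∑ e ∈ G.incidenceFinset v, fe e := by
    rw [G.incidenceFinset_eq_filter, Finset.sum_filter,
      Finset.sum_coe_sort G.edgeFinset fun e => if v ∈ e then fe e else 0]
  simp [totalWeightForm, totalWeight, apply_ite (MvPolynomial.eval _), ← hedges]

end TotalWeight

section TotalWeightPoly

variable {V R : Type*} [LinearOrder V] (G : SimpleGraph V) [Fintype G.edgeSet] [CommRing R]

variable (R) in
/-- The polynomial `P̃_G` for a graph on an arbitrary linearly ordered vertex type, with
coefficients in an arbitrary commutative ring. -/
noncomputable def totalWeightPoly : MvPolynomial (V ⊕ ↥G.edgeFinset) R :=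
  ∏ e : ↥G.edgeFinset, (totalWeightForm R G e.val.inf - totalWeightForm R G e.val.sup)

theorem isHomogeneous_totalWeightPoly :
    (totalWeightPoly R G).IsHomogeneous G.edgeFinset.card := by
  have hprod := MvPolynomial.IsHomogeneous.prod Finset.univ
    (fun e : ↥G.edgeFinset => totalWeightForm R G e.val.inf - totalWeightForm R G e.val.sup)
    (fun _ => 1)
    fun e _ => (isHomogeneous_totalWeightForm G _).sub (isHomogeneous_totalWeightForm G _)
  simpa [totalWeightPoly] using hprod

theorem map_totalWeightPoly {S : Type*} [CommRing S] (f : R →+* S) :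
    MvPolynomial.map f (totalWeightPoly R G) = totalWeightPoly S G := by
  simp [totalWeightPoly, map_prod, map_totalWeightForm]

theorem eval_totalWeightPoly_ne_zero_iff [IsDomain R] [G.LocallyFinite] (fv : V → R)
    (fe : Sym2 V → R) :
    MvPolynomial.eval (Sum.elim fv fun e : ↥G.edgeFinset => fe e) (totalWeightPoly R G) ≠ 0 ↔
      ∀ ⦃i j : V⦄, G.Adj i j → totalWeight G fv fe i ≠ totalWeight G fv fe j := by
  simp only [totalWeightPoly, map_prod, map_sub, eval_totalWeightForm, Finset.prod_ne_zero_iff,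
    sub_ne_zero, Finset.mem_univ, forall_const, Subtype.forall, SimpleGraph.mem_edgeFinset]
  constructor
  · intro h i j hij
    have hedge := h s(i, j) hij
    rcases le_total i j with hle | hle
    · simpa [hle] using hedge
    · simpa [hle] using hedge.symm
  · intro h e
    induction e with | _ i j
    intro hij
    rcases le_total i j with hle | hle
    · simpa [hle] using h hij
    · simpa [hle] using h hij.symm

end TotalWeightPoly

theorem choosable_of_coeff_ne_zero_general {V R : Type*} [Fintype V] [LinearOrder V] [CommRing R]
    [IsDomain R] (G : SimpleGraph V) [DecidableRel G.Adj] {t : V ⊕ ↥G.edgeFinset →₀ ℕ}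
    (ht : MvPolynomial.coeff t (totalWeightPoly R G) ≠ 0) (Lv : V → Finset R)
    (Le : Sym2 V → Finset R) (hv : ∀ v, t (Sum.inl v) < (Lv v).card)
    (he : ∀ e : ↥G.edgeFinset, t (Sum.inr e) < (Le e).card) :
    ∃ (fv : V → R) (fe : Sym2 V → R),
      (∀ v, fv v ∈ Lv v) ∧ (∀ e ∈ G.edgeFinset, fe e ∈ Le e) ∧
      ∀ ⦃i j : V⦄, G.Adj i j → totalWeight G fv fe i ≠ totalWeight G fv fe j := by
  obtain ⟨x, hx, hx_ne⟩ := exists_mem_eval_ne_zero_of_isHomogeneous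
    (isHomogeneous_totalWeightPoly G) ht (Sum.elim Lv fun e => Le e) (Sum.rec hv he)
  obtain ⟨fe, hfe⟩ : ∃ fe : Sym2 V → R, ∀ e : ↥G.edgeFinset, fe e = x (Sum.inr e) :=
    ⟨Function.extend Subtype.val (x ∘ Sum.inr) 0, Subtype.val_injective.extend_apply _ _⟩
  have hx_eq : x = Sum.elim (x ∘ Sum.inl) fun e : ↥G.edgeFinset => fe e := by
    ext (v | e) <;> simp [hfe]
  refine ⟨x ∘ Sum.inl, fe, fun v => hx (Sum.inl v), fun e h => ?_, ?_⟩
  · simpa [hfe ⟨e, h⟩] using hx (Sum.inr ⟨e, h⟩)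
  · rwa [← eval_totalWeightPoly_ne_zero_iff, ← hx_eq]

theorem PtG_eq_map_totalWeightPoly {n : ℕ} (G : SimpleGraph (Fin n)) [DecidableRel G.Adj] :
    PtG G = MvPolynomial.map Complex.ofRealHom (totalWeightPoly ℝ G) :=
  (map_totalWeightPoly G Complex.ofRealHom).symm

/-- If for some `K : V ∪ E → ℕ` with `Σ_z K z = |E|`, `K v ≤ k − 1` (i.e. `K v < k`) for every vertex
`v` and `K e ≤ k' − 1` (i.e. `K e < k'`) for every edge `e`, the coefficient of `∏_z x_z^{K z}` in `P̃_G` is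
nonzero, then `G` is total weight `(k,k')`-choosable. -/
theorem choosable_of_coeff_ne_zero {n k k' : ℕ} (G : SimpleGraph (Fin n))
    [DecidableRel G.Adj] (K : Fin n ⊕ ↥G.edgeFinset → ℕ)
    (hsum : ∑ z, K z = G.edgeFinset.card)
    (hv : ∀ v : Fin n, K (Sum.inl v) < k)
    (he : ∀ e : ↥G.edgeFinset, K (Sum.inr e) < k')
    (hcoe : MvPolynomial.coeff (Finsupp.equivFunOnFinite.symm K) (PtG G) ≠ 0) :
    TotalWeightChoosable G k k' := by
  have hcoeff_real :
      MvPolynomial.coeff (Finsupp.equivFunOnFinite.symm K) (totalWeightPoly ℝ G) ≠ 0 := by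
    rw [PtG_eq_map_totalWeightPoly, MvPolynomial.coeff_map] at hcoe
    exact ne_zero_of_map hcoe
  exact fun Lv Le hLv hLe => choosable_of_coeff_ne_zero_general G hcoeff_real Lv Le
    (fun v => (hv v).trans_eq (hLv v).symm) (fun e => (he e).trans_eq (hLe e e.prop).symm)
end
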